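/- (Multiple Bailey transformation II under type-B termination.) Let a, x ∈ ℂ^m and s, c_0, c_1, c_2, d_0, d_1, d_2 ∈ ℂ satisfy the balancing condition Σ_{i=1}^m a_i + Σ_{k=0}^{2}(c_k + d_k) = 2δ + 3s and the termination condition a_i = −α_i δ for all i = 1,…,m, for some α = (α_1,…,α_m) ∈ ℕ^m. Set s̃ = δ + 2s − c_0 − c_1 − c_2, c̃_0 = δ + s − c_1 − c_2, c̃_1 = δ + s − c_0 − c_2, c̃_2 = δ + s − c_0 − c_1, and x̃_i = a_i − x_i − |a| for i = 1,…,m, where |a| = a_1 + ⋯ + a_m. Then, for generic parameters (all brackets appearing in denominators nonzero): E^{m,3}( a; (x̃_1,…,x̃_m) | s̃; (c̃_0, c̃_1, c̃_2); (d_0, d_1, d_2) ) = ∏_{i=1}^m ( [δ+s+x_i−d_0]_{α_i} [δ+s+x_i−d_1]_{α_i} / ([δ+s+x_i]_{α_i} [δ+s+x_i−d_0−d_1]_{α_i}) ) · ∏_{i=1}^m ( [δ+s+x_i−d_2]_{α_i} [δ+s+x_i−d_0−d_1−d_2]_{α_i} / ([δ+s+x_i−d_0−d_2]_{α_i} [δ+s+x_i−d_1−d_2]_{α_i})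 ) · E^{m,3}( a; x | s; (c_0, c_1, c_2); (d_0, d_1, d_2) ). -/

import Mathlib

/-!
The terminating series `E^{m,3}` is rewritten as a sum over subsets. The strings
`x i, x i + δ, …, x i + (α i - 1) δ` give a finite set `T` of nodes; after multiplication by a
normalising constant, the series becomes a sum `G3` over all `I ⊆ T` of a weight that is polynomial
in the brackets of the parameters `u`, `v`. The sets that are not unions of initial segments of
strings have weight zero, since they produce a factor `f 0`, and the remaining ones correspond to
the indices `μ ≤ α` (`G3_nodes`).

The sum `G3` makes sense for arbitrary nodes, and this allows induction on the number of nodes. As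
a function of `v1` with `v1 + v2` fixed, it lies in the space `Ev` spanned by products of `#T`
factors invariant under the interchange of `v1` and `v2`. By the Riemann relation such a function is
determined by its values at `#T + 1` points (`Ev.eq_of_eq`). The points `v1 = 0` and `v1 = y p + δ + s` are
chosen: at `v1 = 0` only the empty set contributes, and at `v1 = y p + δ + s` the sum reduces to
one over `T` without `p`. In this way one obtains the Jackson summation (`jackson`) and from it a
symmetry of the balanced `G3` which shifts `s`, one `u` and two of the `v` by a common amount
(`swap`). Three such symmetries (`swap_all`), together with the passage from `I` to its complement
with reflected nodes (`G3_neg`), give the transformation for generic `x` (`generic_case`).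

The interpolation needs conditions on `x` beyond the nonvanishing of the denominators. They are
removed by moving `x` along a line: the zeros of `f` are countable, so the additional conditions
hold for all but countably many values of the deformation parameter, and both sides are continuous
at the original `x` (`pert_dense`, `Evw_continuousAt`).
-/

open Finset

/-- Shifted factorial `[x]_k = [x][x+δ]⋯[x+(k-1)δ]` with respect to the bracket `f`. -/
noncomputable def sf (f : ℂ → ℂ) (δ : ℂ) (x : ℂ) (k : ℕ) : ℂ :=
  ∏ i ∈ Finset.range k, f (x + (i : ℂ) * δ)

/-- Difference product `Δ(x) = ∏_{i<j} [x_i - x_j]`. -/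
noncomputable def Del (f : ℂ → ℂ) {m : ℕ} (x : Fin m → ℂ) : ℂ :=
  ∏ i : Fin m, ∏ j ∈ Finset.univ.filter (fun j => i < j), f (x i - x j)

/-- The multiple hypergeometric series `Φ^{m,n}_N(a; x | b; c)`. -/
noncomputable def Phi (f : ℂ → ℂ) (δ : ℂ) {m n : ℕ} (a x : Fin m → ℂ)
    (b c : Fin n → ℂ) (N : ℕ) : ℂ :=
  ∑ μ ∈ Finset.Nat.antidiagonalTuple m N,
    (Del f (fun i => x i + (μ i : ℂ) * δ) / Del f x)
      * (∏ i, ∏ j, sf f δ (x i - x j + a j) (μ i) / sf f δ (x i - x j + δ) (μ i))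
      * (∏ i, ∏ k, sf f δ (x i + b k) (μ i) / sf f δ (x i + c k) (μ i))

/-- The `μ`-th summand of the very well-poised series `E^{m,n}(a; x | s; u; v)`. -/
noncomputable def Eterm (f : ℂ → ℂ) (δ : ℂ) {m n : ℕ} (a x : Fin m → ℂ) (s : ℂ)
    (u v : Fin n → ℂ) (μ : Fin m → ℕ) : ℂ :=
  (Del f (fun i => x i + (μ i : ℂ) * δ) / Del f x)
    * (∏ i, f (x i + s + (((∑ j, μ j) + μ i : ℕ) : ℂ) * δ) / f (x i + s))
    * (∏ j, (sf f δ (s + x j) (∑ i, μ i) / sf f δ (δ + s + x j - a j) (∑ i, μ i))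
        * ∏ i, sf f δ (x i - x j + a j) (μ i) / sf f δ (x i - x j + δ) (μ i))
    * (∏ k, (sf f δ (v k) (∑ i, μ i) / sf f δ (δ + s - u k) (∑ i, μ i))
        * ∏ i, sf f δ (x i + u k) (μ i) / sf f δ (x i + δ + s - v k) (μ i))

/-- The very well-poised multiple series `E^{m,n}(a; x | s; u; v)`. -/
noncomputable def Evw (f : ℂ → ℂ) (δ : ℂ) {m n : ℕ} (a x : Fin m → ℂ) (s : ℂ)
    (u v : Fin n → ℂ) : ℂ :=
  ∑' μ : Fin m → ℕ, Eterm f δ a x s u v μ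

/-- The one-dimensional very well-poised series `_{r+3}E_{r+2}(s; u_1, …, u_r)`. -/
noncomputable def E1 (f : ℂ → ℂ) (δ : ℂ) {r : ℕ} (s : ℂ) (u : Fin r → ℂ) : ℂ :=
  ∑' k : ℕ, (f (s + 2 * (k : ℂ) * δ) / f s) * (sf f δ s k / sf f δ δ k)
    * ∏ i, sf f δ (u i) k / sf f δ (δ + s - u i) k

/-! ### Interpolation of even functions -/

/-- The Riemann relation (three-term addition formula) for the bracket `f`. -/
def Riem (f : ℂ → ℂ) : Prop := ∀ x y u v : ℂ,
      f (x + y) * f (x - y) * f (u + v) * f (u - v) =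
        f (x + u) * f (x - u) * f (y + v) * f (y - v)
          - f (x + v) * f (x - v) * f (y + u) * f (y - u)

theorem odd_zero {f : ℂ → ℂ} (hodd : ∀ t : ℂ, f (-t) = -f t) : f 0 = 0 := by
  have h := hodd 0
  simp only [neg_zero] at h
  exact self_eq_neg.mp h

theorem odd_sub {f : ℂ → ℂ} (hodd : ∀ t : ℂ, f (-t) = -f t) (a b : ℂ) :
    f (a - b) = -f (b - a) := by rw [← hodd, neg_sub]

/-- The elementary function of `w` that vanishes at `w = r` and is invariant under `w ↦ q - w`. -/
def ev (f : ℂ → ℂ) (q r w : ℂ) : ℂ := f (w - r) * f (q - w - r)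

/-- The functions of `w` spanned by products of `L` elementary factors `ev f q r`. They play the
role of even theta functions of order `2L`: such a function is determined by `L + 1` values. -/
inductive Ev (f : ℂ → ℂ) (q : ℂ) : ℕ → (ℂ → ℂ) → Prop
  | const (c : ℂ) : Ev f q 0 (fun _ => c)
  | mul (r : ℂ) {L : ℕ} {g : ℂ → ℂ} : Ev f q L g → Ev f q (L + 1) (fun w => ev f q r w * g w)
  | add {L : ℕ} {g h : ℂ → ℂ} : Ev f q L g → Ev f q L h → Ev f q L (fun w => g w + h w)

/-- Any elementary factor is a linear combination of two others; this is the Riemann relation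
with all variables centred at `q / 2`. -/
theorem ev_three {f : ℂ → ℂ} (hodd : ∀ t : ℂ, f (-t) = -f t) (hR : Riem f) (q a b r w : ℂ) :
    ev f q r w * (f (a - b) * f (a + b - q)) =
      (f (q - r - b) * f (b - r)) * ev f q a w - (f (q - r - a) * f (a - r)) * ev f q b w := by
  have h := hR (q / 2 - r) (w - q / 2) (q / 2 - a) (q / 2 - b)
  rw [show q / 2 - r + (w - q / 2) = w - r by ring,
    show q / 2 - r - (w - q / 2) = q - w - r by ring,
    show q / 2 - a + (q / 2 - b) = -(a + b - q) by ring,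
    show q / 2 - a - (q / 2 - b) = -(a - b) by ring,
    show q / 2 - r + (q / 2 - a) = q - r - a by ring,
    show q / 2 - r - (q / 2 - a) = a - r by ring,
    show q / 2 - r + (q / 2 - b) = q - r - b by ring,
    show q / 2 - r - (q / 2 - b) = b - r by ring,
    show w - q / 2 + (q / 2 - b) = w - b by ring,
    show w - q / 2 - (q / 2 - b) = -(q - w - b) by ring,
    show w - q / 2 + (q / 2 - a) = w - a by ring,
    show w - q / 2 - (q / 2 - a) = -(q - w - a) by ring] at h
  simp only [hodd] at h
  unfold ev
  linear_combination h

/-- Lagrange basis: a function in `Ev f q L` is a combination of the products that omit one of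
`L + 1` nodes in general position. -/
theorem Ev.span {f : ℂ → ℂ} (hodd : ∀ t : ℂ, f (-t) = -f t) (hR : Riem f) {κ : Type*}
    [DecidableEq κ] {q : ℂ} (pt : κ → ℂ) {L : ℕ} {g : ℂ → ℂ} (hg : Ev f q L g) :
    ∀ N : Finset κ, N.card = L + 1 →
    (∀ a ∈ N, ∀ b ∈ N, a ≠ b → f (pt a - pt b) ≠ 0 ∧ f (pt a + pt b - q) ≠ 0) →
    ∃ l : κ → ℂ, ∀ w, g w = ∑ a ∈ N, l a * ∏ c ∈ N.erase a, ev f q (pt c) w := by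
  induction hg with
  | const c =>
    intro N hN _
    obtain ⟨a, rfl⟩ := Finset.card_eq_one.mp hN
    exact ⟨fun _ => c, fun w => by simp⟩
  | @add L g h _ _ ih1 ih2 =>
    intro N hN hnd
    obtain ⟨l1, h1⟩ := ih1 N hN hnd
    obtain ⟨l2, h2⟩ := ih2 N hN hnd
    exact ⟨fun a => l1 a + l2 a, fun w => by simp only [h1, h2, add_mul, sum_add_distrib]⟩
  | @mul r L g _ ih =>
    intro N hN hnd
    obtain ⟨b, hb⟩ : N.Nonempty := by
      rw [← Finset.card_pos]; omega
    obtain ⟨l, hl⟩ := ih (N.erase b) (by rw [card_erase_of_mem hb]; omega)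
      (fun a ha c hc => hnd a (mem_of_mem_erase ha) c (mem_of_mem_erase hc))
    have hD : ∀ a ∈ N.erase b, f (pt a - pt b) * f (pt a + pt b - q) ≠ 0 := fun a ha =>
      have := hnd a (mem_of_mem_erase ha) b hb (ne_of_mem_erase ha)
      mul_ne_zero this.1 this.2
    set c1 : κ → ℂ := fun a => -(f (q - r - pt a) * f (pt a - r)) /
      (f (pt a - pt b) * f (pt a + pt b - q)) with hc1
    set c2 : κ → ℂ := fun a => (f (q - r - pt b) * f (pt b - r)) /
      (f (pt a - pt b) * f (pt a + pt b - q)) with hc2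
    have key : ∀ a ∈ N.erase b, ∀ w, ev f q r w = c1 a * ev f q (pt b) w
        + c2 a * ev f q (pt a) w := by
      intro a ha w
      have h3 := ev_three hodd hR q (pt a) (pt b) r w
      have := hD a ha
      simp only [hc1, hc2]
      rw [div_mul_eq_mul_div, div_mul_eq_mul_div, ← add_div, eq_div_iff this]
      linear_combination h3
    refine ⟨fun a => if a = b then ∑ a ∈ N.erase b, l a * c2 a else l a * c1 a, fun w => ?_⟩
    beta_reduce
    rw [← Finset.add_sum_erase N _ hb, hl w, mul_sum, if_pos rfl, sum_mul, ← sum_add_distrib]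
    refine sum_congr rfl fun a ha => ?_
    rw [if_neg (ne_of_mem_erase ha), key a ha w]
    have e1 : ∏ c ∈ N.erase b, ev f q (pt c) w
        = ev f q (pt a) w * ∏ c ∈ (N.erase b).erase a, ev f q (pt c) w :=
      (mul_prod_erase _ _ ha).symm
    have e2 : ∏ c ∈ N.erase a, ev f q (pt c) w
        = ev f q (pt b) w * ∏ c ∈ (N.erase b).erase a, ev f q (pt c) w := by
      rw [erase_right_comm]
      exact (mul_prod_erase _ _ (mem_erase.mpr ⟨(ne_of_mem_erase ha).symm, hb⟩)).symm
    rw [e1, e2]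
    ring

/-- A function in `Ev f q L` that vanishes at `L + 1` nodes in general position is zero. -/
theorem Ev.eq_zero {f : ℂ → ℂ} (hodd : ∀ t : ℂ, f (-t) = -f t) (hR : Riem f) {κ : Type*}
    [DecidableEq κ] {q : ℂ} (pt : κ → ℂ) {L : ℕ} {g : ℂ → ℂ} (hg : Ev f q L g)
    (N : Finset κ) (hN : N.card = L + 1)
    (hnd : ∀ a ∈ N, ∀ b ∈ N, a ≠ b → f (pt a - pt b) ≠ 0 ∧ f (pt a + pt b - q) ≠ 0)
    (h0 : ∀ a ∈ N, g (pt a) = 0) (w : ℂ) : g w = 0 := by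
  obtain ⟨l, hl⟩ := hg.span hodd hR pt N hN hnd
  have hl0 : ∀ a ∈ N, l a = 0 := by
    intro a ha
    have h := h0 a ha
    rw [hl, Finset.sum_eq_single_of_mem a ha] at h
    · refine (mul_eq_zero.mp h).resolve_right (prod_ne_zero_iff.mpr fun c hc => ?_)
      have := hnd a ha c (mem_of_mem_erase hc) (ne_of_mem_erase hc).symm
      refine mul_ne_zero this.1 ?_
      rw [show q - pt a - pt c = -(pt a + pt c - q) by ring, hodd]
      exact neg_ne_zero.mpr this.2
    · intro b _ hba
      rw [prod_eq_zero (mem_erase.mpr ⟨hba.symm, ha⟩), mul_zero]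
      simp [ev, odd_zero hodd]
  rw [hl]
  exact sum_eq_zero fun a ha => by rw [hl0 a ha, zero_mul]

theorem Ev.smul {f : ℂ → ℂ} {q : ℂ} (c : ℂ) {L : ℕ} {g : ℂ → ℂ} (hg : Ev f q L g) :
    Ev f q L (fun w => c * g w) := by
  induction hg with
  | const d => exact Ev.const (c * d)
  | add _ _ h1 h2 => simpa only [mul_add] using Ev.add h1 h2
  | mul r _ h => simpa only [mul_left_comm c] using Ev.mul r h

theorem Ev.zero {f : ℂ → ℂ} {q : ℂ} : ∀ L : ℕ, Ev f q L (fun _ => 0)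
  | 0 => Ev.const 0
  | L + 1 => by simpa using Ev.mul (f := f) (q := q) 0 (Ev.zero L)

theorem Ev.sum {f : ℂ → ℂ} {q : ℂ} {L : ℕ} {κ : Type*} (N : Finset κ) (g : κ → ℂ → ℂ)
    (h : ∀ a ∈ N, Ev f q L (g a)) : Ev f q L (fun w => ∑ a ∈ N, g a w) := by
  classical
  induction N using Finset.induction_on with
  | empty => simpa using Ev.zero L
  | insert a N ha ih =>
    simp only [sum_insert ha]
    exact Ev.add (h a (mem_insert_self _ _)) (ih fun b hb => h b (mem_insert_of_mem hb))

theorem Ev.prod_mul {f : ℂ → ℂ} {q : ℂ} {L : ℕ} {κ : Type*} (N : Finset κ) (r : κ → ℂ)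
    {g : ℂ → ℂ} (hg : Ev f q L g) :
    Ev f q (L + N.card) (fun w => (∏ a ∈ N, ev f q (r a) w) * g w) := by
  classical
  induction N using Finset.induction_on with
  | empty => simpa using hg
  | insert a N ha ih =>
    simp only [prod_insert ha, card_insert_of_notMem ha, mul_assoc]
    exact Ev.mul (r a) ih

/-- Two functions in `Ev f q L` that agree at `L + 1` nodes in general position are equal. -/
theorem Ev.eq_of_eq {f : ℂ → ℂ} (hodd : ∀ t : ℂ, f (-t) = -f t) (hR : Riem f) {κ : Type*}
    [DecidableEq κ] {q : ℂ} (pt : κ → ℂ) {L : ℕ} {g h : ℂ → ℂ} (hg : Ev f q L g)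
    (hh : Ev f q L h) (N : Finset κ) (hN : N.card = L + 1)
    (hnd : ∀ a ∈ N, ∀ b ∈ N, a ≠ b → f (pt a - pt b) ≠ 0 ∧ f (pt a + pt b - q) ≠ 0)
    (h0 : ∀ a ∈ N, g (pt a) = h (pt a)) (w : ℂ) : g w = h w := by
  have := (hg.add (hh.smul (-1))).eq_zero hodd hR pt N hN hnd
    (fun a ha => by simp [h0 a ha]) w
  linear_combination this

/-! ### Sums over subsets of a finite set of nodes -/

section
variable {ι : Type*} [DecidableEq ι]

/-- The part of the weight of `I ⊆ T` that does not involve the parameters `u`, `v`. -/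
noncomputable def base (f : ℂ → ℂ) (δ : ℂ) (y : ι → ℂ) (T : Finset ι) (s : ℂ) (I : Finset ι) : ℂ :=
  (-1) ^ #I * (∏ i ∈ I, ∏ j ∈ T \ I, f (y i - y j - δ) / f (y i - y j))
    * ((∏ j ∈ I, (f (y j + s + (#I : ℂ) * δ))⁻¹)
      * ∏ j ∈ T \ I, (f (y j + s + ((#I : ℂ) + 1) * δ))⁻¹)

/-- The factor of the weight of `I ⊆ T` contributed by an upper parameter `u`, with the
denominators cleared. -/
noncomputable def pu (f : ℂ → ℂ) (δ : ℂ) (y : ι → ℂ) (T : Finset ι) (s u : ℂ) (I : Finset ι) : ℂ :=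
  sf f δ (δ + s - u + (#I : ℂ) * δ) #(T \ I) * ∏ i ∈ I, f (y i + u)

/-- The factor of the weight of `I ⊆ T` contributed by a parameter `v`, with the denominators
cleared. -/
noncomputable def pv (f : ℂ → ℂ) (δ : ℂ) (y : ι → ℂ) (T : Finset ι) (s v : ℂ) (I : Finset ι) : ℂ :=
  sf f δ v #I * ∏ i ∈ T \ I, f (y i + δ + s - v)

theorem sf_succ (f : ℂ → ℂ) (δ x : ℂ) (k : ℕ) :
    sf f δ x (k + 1) = sf f δ x k * f (x + (k : ℂ) * δ) := by
  simp [sf, prod_range_succ]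

theorem sf_succ' (f : ℂ → ℂ) (δ x : ℂ) (k : ℕ) :
    sf f δ x (k + 1) = f x * sf f δ (x + δ) k := by
  simp only [sf, prod_range_succ', Nat.cast_zero, zero_mul, add_zero, mul_comm (f x)]
  congr 1
  refine prod_congr rfl fun i _ => ?_
  congr 1; push_cast; ring

theorem sf_add (f : ℂ → ℂ) (δ x : ℂ) (k l : ℕ) :
    sf f δ x (k + l) = sf f δ x k * sf f δ (x + (k : ℂ) * δ) l := by
  simp only [sf, prod_range_add]
  congr 1
  refine prod_congr rfl fun i _ => ?_
  congr 1; push_cast; ring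

/-- Reversal of a shifted factorial: the `k` arguments of `sf f δ x' k` are those of
`sf f δ x k` with opposite signs, in reverse order. -/
theorem sf_rev {f : ℂ → ℂ} (hodd : ∀ t : ℂ, f (-t) = -f t) (δ x x' : ℂ) (k : ℕ)
    (h : x + x' + (k : ℂ) * δ = δ) : sf f δ x k = (-1) ^ k * sf f δ x' k := by
  rw [sf, sf, ← prod_range_reflect, ← card_range k, ← prod_const, card_range, ← prod_mul_distrib]
  refine prod_congr rfl fun i hi => ?_
  rw [mem_range] at hi
  rw [neg_one_mul, ← hodd]
  congr 1
  rw [Nat.cast_sub (by omega), Nat.cast_sub (by omega)]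
  push_cast
  linear_combination h

variable {f : ℂ → ℂ} {δ : ℂ} {y : ι → ℂ} {T I : Finset ι} {p : ι}

theorem sdiff_ins (hp : p ∉ T) : insert p T \ insert p I = T \ I := by
  ext i
  simp only [mem_sdiff, mem_insert, not_or]
  constructor
  · rintro ⟨h | h, h1, h2⟩
    · exact absurd h h1
    · exact ⟨h, h2⟩
  · rintro ⟨h, h2⟩
    exact ⟨Or.inr h, fun e => hp (e ▸ h), h2⟩

theorem pu_insert (hp : p ∉ T) (hI : I ⊆ T) (s u : ℂ) :
    pu f δ y (insert p T) s u (insert p I) = f (y p + u) * pu f δ y T (s + δ) u I := by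
  have hpI : p ∉ I := fun h => hp (hI h)
  rw [pu, pu, sdiff_ins hp, prod_insert hpI, card_insert_of_notMem hpI]
  rw [show δ + s - u + ((#I + 1 : ℕ) : ℂ) * δ = δ + (s + δ) - u + (#I : ℂ) * δ by push_cast; ring]
  ring

theorem pv_insert (hp : p ∉ T) (hI : I ⊆ T) (s v : ℂ) :
    pv f δ y (insert p T) s v (insert p I) = f v * pv f δ y T (s + δ) (v + δ) I := by
  have hpI : p ∉ I := fun h => hp (hI h)
  rw [pv, pv, sdiff_ins hp, card_insert_of_notMem hpI, sf_succ', mul_assoc]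
  congr 2
  refine prod_congr rfl fun i _ => ?_
  congr 1; ring

theorem pv_zero (hodd : ∀ t : ℂ, f (-t) = -f t) (hpT : p ∈ T) (hpI : p ∉ I) (s : ℂ) :
    pv f δ y T s (y p + δ + s) I = 0 := by
  rw [pv, prod_eq_zero (mem_sdiff.mpr ⟨hpT, hpI⟩), mul_zero]
  rw [sub_self, odd_zero hodd]

/-- At `v = y p + δ + s` the bracket in `pv` that involves `p` cancels, so that the weight of
`insert p I` reduces to the weight of `I` in the node set without `p`, with `s` shifted by `δ`. -/
theorem base_pv_insert (hodd : ∀ t : ℂ, f (-t) = -f t) (hp : p ∉ T) (hI : I ⊆ T) (s : ℂ)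
    (hy : ∀ j ∈ T, f (y p - y j) ≠ 0) (hs : f (y p + δ + s + (#I : ℂ) * δ) ≠ 0) :
    base f δ y (insert p T) s (insert p I) * pv f δ y (insert p T) s (y p + δ + s) (insert p I)
      = -(base f δ y T (s + δ) I * pv f δ y T (s + δ) (y p + δ + s) I) := by
  have hpI : p ∉ I := fun h => hp (hI h)
  have e1 : (∏ j ∈ T \ I, f (y p - y j - δ) / f (y p - y j)) *
      ∏ j ∈ T \ I, f (y j + δ + s - (y p + δ + s))
      = ∏ j ∈ T \ I, f (y j + δ + (s + δ) - (y p + δ + s)) := by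
    rw [← prod_mul_distrib]
    refine prod_congr rfl fun j hj => ?_
    have := hy j (mem_sdiff.mp hj).1
    rw [show y j + δ + s - (y p + δ + s) = -(y p - y j) by ring,
      show y j + δ + (s + δ) - (y p + δ + s) = -(y p - y j - δ) by ring, hodd, hodd]
    field_simp
  have e2 : ∏ j ∈ I, (f (y j + s + ((#I + 1 : ℕ) : ℂ) * δ))⁻¹
      = ∏ j ∈ I, (f (y j + (s + δ) + (#I : ℂ) * δ))⁻¹ :=
    prod_congr rfl fun j _ => by congr 2; push_cast; ring
  have e3 : ∏ j ∈ T \ I, (f (y j + s + (((#I + 1 : ℕ) : ℂ) + 1) * δ))⁻¹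
      = ∏ j ∈ T \ I, (f (y j + (s + δ) + ((#I : ℂ) + 1) * δ))⁻¹ :=
    prod_congr rfl fun j _ => by congr 2; push_cast; ring
  rw [base, base, pv, pv, sdiff_ins hp, prod_insert hpI, card_insert_of_notMem hpI,
    prod_insert hpI, e2, e3, sf_succ, ← e1,
    show y p + s + ((#I + 1 : ℕ) : ℂ) * δ = y p + δ + s + (#I : ℂ) * δ by push_cast; ring, pow_succ]
  have hc := inv_mul_cancel₀ hs
  generalize f (y p + δ + s + (#I : ℂ) * δ) = D at hc ⊢
  linear_combination (-(-1) ^ #I * (∏ j ∈ T \ I, f (y p - y j - δ) / f (y p - y j))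
    * (∏ i ∈ I, ∏ j ∈ T \ I, f (y i - y j - δ) / f (y i - y j))
    * (∏ j ∈ I, (f (y j + (s + δ) + (#I : ℂ) * δ))⁻¹)
    * (∏ j ∈ T \ I, (f (y j + (s + δ) + ((#I : ℂ) + 1) * δ))⁻¹)
    * sf f δ (y p + δ + s) #I * ∏ j ∈ T \ I, f (y j + δ + s - (y p + δ + s))) * hc

/-- Genericity of the nodes `y` relative to a group `A` of parameters. -/
structure Gen (f : ℂ → ℂ) (A : AddSubgroup ℂ) (y : ι → ℂ) : Prop where
  one : ∀ p, ∀ c ∈ A, f (y p + c) ≠ 0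
  two : ∀ p r, p ≠ r → ∀ c ∈ A, f (y p + y r + c) ≠ 0
  diff : ∀ p r, p ≠ r → f (y p - y r) ≠ 0

/-- At `v = y p + δ + s` only the sets that contain `p` contribute, and the sum reduces to one
over the subsets of the remaining nodes. -/
theorem sum_pole (hodd : ∀ t : ℂ, f (-t) = -f t) {A : AddSubgroup ℂ} (hδ : δ ∈ A)
    (hy : Gen f A y) (hp : p ∉ T) {s : ℂ} (hs : s ∈ A) (Q Q' : Finset ι → ℂ) (c : ℂ)
    (hQ : ∀ I ⊆ T, Q (insert p I) = c * Q' I) :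
    ∑ I ∈ (insert p T).powerset,
      base f δ y (insert p T) s I * pv f δ y (insert p T) s (y p + δ + s) I * Q I
      = -c * ∑ I ∈ T.powerset,
        base f δ y T (s + δ) I * pv f δ y T (s + δ) (y p + δ + s) I * Q' I := by
  rw [sum_powerset_insert hp, sum_eq_zero, zero_add, mul_sum]
  · refine sum_congr rfl fun I hI => ?_
    rw [mem_powerset] at hI
    rw [base_pv_insert hodd hp hI, hQ I hI]
    · ring
    · exact fun j hj => hy.diff _ _ fun e => hp (e ▸ hj)
    · have : δ + s + (#I : ℂ) * δ ∈ A := by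
        refine A.add_mem (A.add_mem hδ hs) ?_
        rw [← nsmul_eq_mul]; exact A.nsmul_mem hδ _
      simpa [add_assoc] using hy.one p _ this
  · intro I hI
    rw [mem_powerset] at hI
    rw [pv_zero hodd (mem_insert_self _ _) (fun h => hp (hI h)), mul_zero, zero_mul]

/-- As a function of `v`, the product of the factors of two parameters with constant sum lies in
`Ev f q #T`. -/
theorem pv_pair_ev (hodd : ∀ t : ℂ, f (-t) = -f t) (hI : I ⊆ T) (s q e : ℂ) :
    Ev f q #T (fun v => pv f δ y T s (v + e) I * pv f δ y T s (q - v + e) I) := by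
  have h := ((Ev.const (f := f) (q := q) 1).prod_mul (range #I) (fun l => -e - (l : ℂ) * δ)).prod_mul
    (T \ I) (fun j => y j + δ + s - e)
  rw [card_range, zero_add, add_comm, card_sdiff_add_card_eq_card hI] at h
  convert h using 2 with v
  simp only [pv, sf, ev, mul_one]
  rw [mul_mul_mul_comm, ← prod_mul_distrib, ← prod_mul_distrib, mul_comm]
  congr 1
  · refine prod_congr rfl fun j _ => ?_
    rw [odd_sub hodd (v)]
    rw [odd_sub hodd (q - v), neg_mul_neg]
    congr 2 <;> ring
  · refine prod_congr rfl fun j _ => ?_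
    congr 2 <;> ring

theorem pv_empty (s v : ℂ) : pv f δ y T s v ∅ = ∏ i ∈ T, f (y i + δ + s - v) := by
  simp [pv, sf]

theorem pu_empty (s u : ℂ) : pu f δ y T s u ∅ = sf f δ (δ + s - u) #T := by
  simp [pu]

/-- When one of the parameters `v` is `0`, only the empty set contributes. -/
theorem sum_at_zero (hodd : ∀ t : ℂ, f (-t) = -f t) {A : AddSubgroup ℂ} (hδ : δ ∈ A)
    (hy : Gen f A y) {s : ℂ} (hs : s ∈ A) (Q : Finset ι → ℂ) :
    ∑ I ∈ T.powerset, base f δ y T s I * pv f δ y T s 0 I * Q I = Q ∅ := by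
  rw [sum_eq_single_of_mem ∅ (empty_mem_powerset _) fun I _ hI => ?_]
  · rw [pv_empty]
    have : base f δ y T s ∅ * ∏ i ∈ T, f (y i + δ + s - 0) = 1 := by
      simp only [base, card_empty, pow_zero, prod_empty, sdiff_empty, one_mul, mul_one,
        Nat.cast_zero, zero_add, sub_zero]
      rw [← prod_mul_distrib]
      refine prod_eq_one fun j _ => ?_
      rw [add_right_comm (y j)]
      refine inv_mul_cancel₀ ?_
      simpa [add_assoc] using hy.one j _ (A.add_mem hδ hs)
    rw [this, one_mul]
  · have : sf f δ 0 #I = 0 := by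
      rw [sf, prod_eq_zero (mem_range.mpr (card_pos.mpr (nonempty_iff_ne_empty.mpr hI)))]
      simp [odd_zero hodd]
    rw [pv, this]; ring

/-- The interpolation nodes `0` and `y p + δ + s` are in general position. -/
theorem nodes_nd (hodd : ∀ t : ℂ, f (-t) = -f t) {A : AddSubgroup ℂ} (hδ : δ ∈ A)
    (hy : Gen f A y) {s q : ℂ} (hs : s ∈ A) (hq : q ∈ A) :
    ∀ a ∈ insertNone T, ∀ b ∈ insertNone T, a ≠ b →
      f (Option.elim a 0 (fun p => y p + δ + s) - Option.elim b 0 (fun p => y p + δ + s)) ≠ 0 ∧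
      f (Option.elim a 0 (fun p => y p + δ + s) + Option.elim b 0 (fun p => y p + δ + s) - q)
        ≠ 0 := by
  have h1 : ∀ p, f (y p + δ + s) ≠ 0 := fun p => by
    simpa [add_assoc] using hy.one p _ (A.add_mem hδ hs)
  have h2 : ∀ p, f (y p + δ + s - q) ≠ 0 := fun p => by
    simpa [add_assoc, add_sub_assoc] using hy.one p _ (A.sub_mem (A.add_mem hδ hs) hq)
  intro a _ b _ hab
  rcases a with _ | a <;> rcases b with _ | b
  · exact absurd rfl hab
  · simp only [Option.elim, zero_sub, zero_add, hodd, neg_ne_zero]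
    exact ⟨h1 b, h2 b⟩
  · simp only [Option.elim, sub_zero, add_zero]
    exact ⟨h1 a, h2 a⟩
  · have hne : a ≠ b := fun e => hab (by rw [e])
    simp only [Option.elim]
    constructor
    · rw [show y a + δ + s - (y b + δ + s) = y a - y b by ring]
      exact hy.diff a b hne
    · rw [show y a + δ + s + (y b + δ + s) - q = y a + y b + (δ + s + (δ + s) - q) by ring]
      exact hy.two a b hne _ (A.sub_mem (A.add_mem (A.add_mem hδ hs) (A.add_mem hδ hs)) hq)

/-- The subset sum with two parameters of each kind. -/
noncomputable def G2 (f : ℂ → ℂ) (δ : ℂ) (y : ι → ℂ) (T : Finset ι) (s u0 u1 v0 v1 : ℂ) : ℂ :=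
  ∑ I ∈ T.powerset, base f δ y T s I * pv f δ y T s v0 I *
    (pv f δ y T s v1 I * pu f δ y T s u0 I * pu f δ y T s u1 I)

/-- The subset sum with three parameters of each kind. -/
noncomputable def G3 (f : ℂ → ℂ) (δ : ℂ) (y : ι → ℂ) (T : Finset ι)
    (s u0 u1 u2 v0 v1 v2 : ℂ) : ℂ :=
  ∑ I ∈ T.powerset, base f δ y T s I * pv f δ y T s v1 I *
    (pv f δ y T s v0 I * pv f δ y T s v2 I
      * (pu f δ y T s u0 I * pu f δ y T s u1 I * pu f δ y T s u2 I))

/-- Summation formula for the balanced `G2` (a form of the Jackson summation). Both sides lie in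
`Ev` as functions of `v0` with `v0 + v1` fixed; at `v0 = 0` they agree by `sum_at_zero`, and at
`v0 = y p + δ + s` by induction on the number of nodes. -/
theorem jackson (hodd : ∀ t : ℂ, f (-t) = -f t) (hR : Riem f) {A : AddSubgroup ℂ} (hδ : δ ∈ A)
    (hy : Gen f A y) (n : ℕ) : ∀ (T : Finset ι) (s u0 u1 v0 v1 : ℂ), #T = n → s ∈ A →
    v0 + v1 ∈ A → u0 + u1 + v0 + v1 = δ + 2 * s + (n : ℂ) * δ →
    G2 f δ y T s u0 u1 v0 v1 = (-1) ^ n * (∏ i ∈ T, f (y i + δ + s - (v0 + v1)))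
      * (sf f δ (δ + s - u0 - v0) n * sf f δ (δ + s - u0 - v1) n) := by
  induction n with
  | zero =>
    intro T s u0 u1 v0 v1 hT _ _ _
    rw [card_eq_zero] at hT
    subst hT
    simp [G2, base, pv, pu, sf]
  | succ n ih =>
    intro T s u0 u1 v0 v1 hT hs hq hbal
    obtain ⟨q, hqd⟩ : ∃ q, q = v0 + v1 := ⟨_, rfl⟩
    obtain rfl : v1 = q - v0 := by rw [hqd]; ring
    rw [← hqd] at hq ⊢
    replace hbal : u0 + u1 + q = δ + 2 * s + ((n + 1 : ℕ) : ℂ) * δ := by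
      rw [← hbal]; ring
    refine Ev.eq_of_eq hodd hR (q := q) (L := #T)
      (g := fun v => G2 f δ y T s u0 u1 v (q - v))
      (h := fun v => (-1) ^ (n + 1) * (∏ i ∈ T, f (y i + δ + s - q))
      * (sf f δ (δ + s - u0 - v) (n + 1) * sf f δ (δ + s - u0 - (q - v)) (n + 1)))
      (fun a : Option ι => Option.elim a 0 (fun p => y p + δ + s)) ?_ ?_
      (insertNone T) (card_insertNone T) (nodes_nd hodd hδ hy hs hq) ?_ v0
    · refine Ev.sum _ _ fun I hI => ?_
      rw [mem_powerset] at hI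
      convert (pv_pair_ev (f := f) (δ := δ) (y := y) hodd hI s q 0).smul
        (base f δ y T s I * (pu f δ y T s u0 I * pu f δ y T s u1 I)) using 2 with v
      simp only [add_zero]; ring
    · refine Ev.smul _ ?_
      have := ((Ev.const (f := f) (q := q) 1).prod_mul (range #T)
        (fun l => δ + s - u0 + (l : ℂ) * δ))
      rw [card_range, zero_add] at this
      convert this using 2 with v
      rw [hT, mul_one, sf, sf, ← prod_mul_distrib]
      refine prod_congr rfl fun l _ => ?_
      rw [ev, odd_sub hodd v, odd_sub hodd (q - v), neg_mul_neg]
      congr 2 <;> ring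
    · intro a ha
      rcases a with _ | p
      · simp only [Option.elim, G2]
        rw [sum_at_zero hodd hδ hy hs, pv_empty, pu_empty, pu_empty, hT, sub_zero, sub_zero,
          sf_rev hodd δ (δ + s - u0 - q) (δ + s - u1) (n + 1) (by linear_combination -hbal)]
        have h2 : ((-1 : ℂ) ^ (n + 1)) * (-1) ^ (n + 1) = 1 := by
          rw [← mul_pow]; simp
        linear_combination -(sf f δ (δ + s - u0) (n + 1) * sf f δ (δ + s - u1) (n + 1)
          * ∏ i ∈ T, f (y i + δ + s - q)) * h2
      · rw [some_mem_insertNone] at ha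
        obtain ⟨T', hp, rfl⟩ : ∃ T', p ∉ T' ∧ insert p T' = T :=
          ⟨T.erase p, notMem_erase _ _, insert_erase ha⟩
        rw [card_insert_of_notMem hp, Nat.succ_inj] at hT
        simp only [Option.elim, G2]
        rw [sum_pole hodd hδ hy hp hs _ (fun I => pv f δ y T' (s + δ) (q - (y p + δ + s) + δ) I
          * pu f δ y T' (s + δ) u0 I * pu f δ y T' (s + δ) u1 I)
          (f (q - (y p + δ + s)) * f (y p + u0) * f (y p + u1))
          (fun I hI => by rw [pv_insert hp hI, pu_insert hp hI, pu_insert hp hI]; ring)]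
        have := ih T' (s + δ) u0 u1 (y p + δ + s) (q - (y p + δ + s) + δ) hT (A.add_mem hs hδ)
          (by convert A.add_mem hq hδ using 1; ring) (by push_cast at hbal; linear_combination hbal)
        rw [G2] at this
        rw [this, prod_insert hp, sf_succ' f δ (δ + s - u0 - (y p + δ + s)), sf_succ]
        rw [show δ + s - u0 - (y p + δ + s) = -(y p + u0) by ring,
          show y p + δ + s - q = -(q - (y p + δ + s)) by ring, hodd, hodd,
          show δ + s - u0 - (q - (y p + δ + s)) + (n : ℂ) * δ = y p + u1 by
            push_cast at hbal; linear_combination -hbal]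
        have e1 : ∏ i ∈ T', f (y i + δ + (s + δ) - (y p + δ + s + (q - (y p + δ + s) + δ)))
          = ∏ i ∈ T', f (y i + δ + s - q) := prod_congr rfl fun i _ => by congr 1; ring
        rw [e1, show δ + (s + δ) - u0 - (y p + δ + s) = -(y p + u0) + δ by ring,
          show δ + (s + δ) - u0 - (q - (y p + δ + s) + δ) = δ + s - u0 - (q - (y p + δ + s)) by ring]
        ring

/-- Basic symmetry of the balanced `G3`: the parameters `s, u0, v1, v2` are shifted by a common
amount `e`. Both sides are interpolated in `v1` with `v1 + v2` fixed. At `v1 = 0` the left side has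
a single term and the right side collapses to `G2`; at `v1 = y p + δ + s` one node is removed. -/
theorem swap (hodd : ∀ t : ℂ, f (-t) = -f t) (hR : Riem f) {A : AddSubgroup ℂ} (hδ : δ ∈ A)
    (hy : Gen f A y) (n : ℕ) : ∀ (T : Finset ι) (s u0 u1 u2 v0 v1 v2 e : ℂ), #T = n → s ∈ A →
    e ∈ A → v0 ∈ A → v1 + v2 ∈ A → u0 + u1 + u2 + v0 + v1 + v2 = 2 * δ + 3 * s + (n : ℂ) * δ →
    u0 + v1 + v2 + e = δ + s →
    G3 f δ y T s u0 u1 u2 v0 v1 v2 = G3 f δ y T (s + e) (u0 + e) u1 u2 v0 (v1 + e) (v2 + e) := by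
  induction n with
  | zero =>
    intro T s u0 u1 u2 v0 v1 v2 e hT _ _ _ _ _ _
    rw [card_eq_zero] at hT
    subst hT
    simp [G3, base, pv, pu, sf]
  | succ n ih =>
    intro T s u0 u1 u2 v0 v1 v2 e hT hs he hv0 hq hbal hee
    obtain ⟨q, hqd⟩ : ∃ q, q = v1 + v2 := ⟨_, rfl⟩
    obtain rfl : v2 = q - v1 := by rw [hqd]; ring
    rw [← hqd] at hq
    replace hbal : u0 + u1 + u2 + v0 + q = 2 * δ + 3 * s + ((n + 1 : ℕ) : ℂ) * δ := by
      rw [← hbal]; ring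
    replace hee : u0 + q + e = δ + s := by rw [← hee]; ring
    clear hqd
    refine Ev.eq_of_eq hodd hR (q := q) (L := #T)
      (g := fun v => G3 f δ y T s u0 u1 u2 v0 v (q - v))
      (h := fun v => G3 f δ y T (s + e) (u0 + e) u1 u2 v0 (v + e) (q - v + e))
      (fun a : Option ι => Option.elim a 0 (fun p => y p + δ + s)) ?_ ?_
      (insertNone T) (card_insertNone T) (nodes_nd hodd hδ hy hs hq) ?_ v1
    · refine Ev.sum _ _ fun I hI => ?_
      rw [mem_powerset] at hI
      convert (pv_pair_ev (f := f) (δ := δ) (y := y) hodd hI s q 0).smul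
        (base f δ y T s I * pv f δ y T s v0 I *
          (pu f δ y T s u0 I * pu f δ y T s u1 I * pu f δ y T s u2 I)) using 2 with v
      simp only [add_zero]; ring
    · refine Ev.sum _ _ fun I hI => ?_
      rw [mem_powerset] at hI
      convert (pv_pair_ev (f := f) (δ := δ) (y := y) hodd hI (s + e) q e).smul
        (base f δ y T (s + e) I * pv f δ y T (s + e) v0 I *
          (pu f δ y T (s + e) (u0 + e) I * pu f δ y T (s + e) u1 I * pu f δ y T (s + e) u2 I))
        using 2 with v
      ring
    · intro a ha
      rcases a with _ | p
      · simp only [Option.elim]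
        rw [G3, sum_at_zero hodd hδ hy hs, pv_empty, pv_empty, pu_empty, pu_empty, pu_empty, hT]
        have hcancel : ∀ I ∈ T.powerset, pv f δ y T (s + e) (q - 0 + e) I
            * pu f δ y T (s + e) (u0 + e) I
            = sf f δ (δ + s - u0) (n + 1) * ∏ i ∈ T, f (y i + δ + s - q) := by
          intro I hI
          rw [mem_powerset] at hI
          rw [pv, pu, ← hT, ← card_sdiff_add_card_eq_card hI, add_comm #(T \ I), sf_add,
            ← prod_sdiff hI]
          rw [show q - 0 + e = δ + s - u0 by linear_combination hee,
            show δ + (s + e) - (u0 + e) = δ + s - u0 by ring]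
          have e1 : ∏ i ∈ T \ I, f (y i + δ + (s + e) - (δ + s - u0))
              = ∏ i ∈ T \ I, f (y i + δ + s - q) :=
            prod_congr rfl fun i _ => by congr 1; linear_combination hee
          have e2 : ∏ i ∈ I, f (y i + (u0 + e)) = ∏ i ∈ I, f (y i + δ + s - q) :=
            prod_congr rfl fun i _ => by congr 1; linear_combination hee
          rw [e1, e2]; ring
        have hG : G3 f δ y T (s + e) (u0 + e) u1 u2 v0 (0 + e) (q - 0 + e)
            = (sf f δ (δ + s - u0) (n + 1) * ∏ i ∈ T, f (y i + δ + s - q))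
              * G2 f δ y T (s + e) u1 u2 v0 e := by
          rw [G3, G2, mul_sum]
          refine sum_congr rfl fun I hI => ?_
          rw [← hcancel I hI, zero_add]; ring
        rw [hG, jackson hodd hR hδ hy (n + 1) T (s + e) u1 u2 v0 e hT (A.add_mem hs he)
          (A.add_mem hv0 he) (by linear_combination hbal - hee),
          sf_rev hodd δ (δ + s - u2) (δ + (s + e) - u1 - v0) (n + 1)
            (by linear_combination hee - hbal), show δ + (s + e) - u1 - e = δ + s - u1 by ring]
        have e1 : ∏ i ∈ T, f (y i + δ + (s + e) - (v0 + e)) = ∏ i ∈ T, f (y i + δ + s - v0) :=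
          prod_congr rfl fun i _ => by congr 1; ring
        rw [e1, sub_zero]; ring
      · rw [some_mem_insertNone] at ha
        obtain ⟨T', hp, rfl⟩ : ∃ T', p ∉ T' ∧ insert p T' = T :=
          ⟨T.erase p, notMem_erase _ _, insert_erase ha⟩
        rw [card_insert_of_notMem hp, Nat.succ_inj] at hT
        simp only [Option.elim]
        have step : ∀ s' u0' v2' : ℂ, s' ∈ A →
            G3 f δ y (insert p T') s' u0' u1 u2 v0 (y p + δ + s') v2' =
            -(f v0 * f v2' * f (y p + u0') * f (y p + u1) * f (y p + u2)) *
            G3 f δ y T' (s' + δ) u0' u1 u2 (v0 + δ) (y p + δ + s') (v2' + δ) := by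
          intro s' u0' v2' hs'
          rw [G3, G3]
          exact sum_pole hodd hδ hy hp hs' _ _ _ fun I hI => by
            rw [pv_insert hp hI, pv_insert hp hI, pu_insert hp hI, pu_insert hp hI,
              pu_insert hp hI]
            ring
        rw [step s u0 _ hs, add_assoc (y p + δ) s e, step (s + e) (u0 + e) _ (A.add_mem hs he),
          ih T' (s + δ) u0 u1 u2 (v0 + δ) (y p + δ + s) (q - (y p + δ + s) + δ) e hT
            (A.add_mem hs hδ) he (A.add_mem hv0 hδ) (by convert A.add_mem hq hδ using 1; ring)
            (by push_cast at hbal; linear_combination hbal) (by linear_combination hee)]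
        rw [show y p + (u0 + e) = -(q - (y p + δ + s)) by linear_combination hee,
          show q - (y p + δ + s) + e = -(y p + u0) by linear_combination hee, hodd, hodd,
          show -(y p + u0) + δ = q - (y p + δ + s) + δ + e by linear_combination -hee,
          add_right_comm s e δ, add_assoc (y p + δ) s e]
        ring

theorem G3_perm (s u0 u1 u2 v0 v1 v2 : ℂ) :
    G3 f δ y T s u0 u1 u2 v0 v1 v2 = G3 f δ y T s u1 u2 u0 v1 v2 v0 := by
  rw [G3, G3]
  exact sum_congr rfl fun I _ => by ring

/-- Composition of the three basic symmetries, singling out `u0`, `u1`, `u2` in turn. -/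
theorem swap_all (hodd : ∀ t : ℂ, f (-t) = -f t) (hR : Riem f) {A : AddSubgroup ℂ} (hδ : δ ∈ A)
    (hy : Gen f A y) (T : Finset ι) (s u0 u1 u2 v0 v1 v2 : ℂ) (hs : s ∈ A)
    (hu0 : u0 ∈ A) (hu1 : u1 ∈ A) (hu2 : u2 ∈ A) (hv0 : v0 ∈ A) (hv1 : v1 ∈ A) (hv2 : v2 ∈ A)
    (hbal : u0 + u1 + u2 + v0 + v1 + v2 = 2 * δ + 3 * s + (#T : ℂ) * δ) :
    G3 f δ y T s u0 u1 u2 v0 v1 v2 =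
      G3 f δ y T (s + (δ + s - u0 - v1 - v2) + (δ + s - u1 - v2 - v0) + (δ + s - u2 - v0 - v1))
        (δ + s - v1 - v2) (δ + s - v2 - v0) (δ + s - v0 - v1)
        (v0 + (δ + s - u1 - v2 - v0) + (δ + s - u2 - v0 - v1))
        (v1 + (δ + s - u0 - v1 - v2) + (δ + s - u2 - v0 - v1))
        (v2 + (δ + s - u0 - v1 - v2) + (δ + s - u1 - v2 - v0)) := by
  obtain ⟨e0, h0⟩ : ∃ e, e = δ + s - u0 - v1 - v2 := ⟨_, rfl⟩
  obtain ⟨e1, h1⟩ : ∃ e, e = δ + s - u1 - v2 - v0 := ⟨_, rfl⟩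
  obtain ⟨e2, h2⟩ : ∃ e, e = δ + s - u2 - v0 - v1 := ⟨_, rfl⟩
  have m0 : e0 ∈ A := by
    rw [h0]; exact A.sub_mem (A.sub_mem (A.sub_mem (A.add_mem hδ hs) hu0) hv1) hv2
  have m1 : e1 ∈ A := by
    rw [h1]; exact A.sub_mem (A.sub_mem (A.sub_mem (A.add_mem hδ hs) hu1) hv2) hv0
  have m2 : e2 ∈ A := by
    rw [h2]; exact A.sub_mem (A.sub_mem (A.sub_mem (A.add_mem hδ hs) hu2) hv0) hv1
  rw [swap hodd hR hδ hy _ T s u0 u1 u2 v0 v1 v2 e0 rfl hs m0 hv0 (A.add_mem hv1 hv2) hbal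
    (by rw [h0]; ring), G3_perm,
    swap hodd hR hδ hy _ T (s + e0) u1 u2 (u0 + e0) (v1 + e0) (v2 + e0) v0 e1 rfl
      (A.add_mem hs m0) m1 (A.add_mem hv1 m0) (A.add_mem (A.add_mem hv2 m0) hv0)
      (by linear_combination hbal) (by rw [h1]; ring), G3_perm,
    swap hodd hR hδ hy _ T (s + e0 + e1) u2 (u0 + e0) (u1 + e1) (v2 + e0 + e1) (v0 + e1) (v1 + e0)
      e2 rfl (A.add_mem (A.add_mem hs m0) m1) m2 (A.add_mem (A.add_mem hv2 m0) m1)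
      (A.add_mem (A.add_mem hv0 m1) (A.add_mem hv1 m0))
      (by linear_combination hbal) (by rw [h2]; ring), G3_perm, ← h0, ← h1, ← h2,
    show u0 + e0 = δ + s - v1 - v2 by rw [h0]; ring, show u1 + e1 = δ + s - v2 - v0 by rw [h1]; ring,
    show u2 + e2 = δ + s - v0 - v1 by rw [h2]; ring]

/-- Complementing `I` while reflecting the nodes changes only `s` in the parameter-free part. -/
theorem base_neg (hodd : ∀ t : ℂ, f (-t) = -f t) (hI : I ⊆ T) (s : ℂ) :
    base f δ (fun i => ((#T : ℂ) - 1) * δ - y i) T s (T \ I) =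
      base f δ y T (-(2 * (#T : ℂ) * δ) - s) I := by
  have hc : (#T : ℂ) = #I + #(T \ I) := by
    rw [← card_sdiff_add_card_eq_card hI]; push_cast; ring
  have e1 : ∏ i ∈ T \ I, ∏ j ∈ I, f (((#T : ℂ) - 1) * δ - y i - (((#T : ℂ) - 1) * δ - y j) - δ)
        / f (((#T : ℂ) - 1) * δ - y i - (((#T : ℂ) - 1) * δ - y j))
      = ∏ i ∈ I, ∏ j ∈ T \ I, f (y i - y j - δ) / f (y i - y j) := by
    rw [prod_comm]
    refine prod_congr rfl fun i _ => prod_congr rfl fun j _ => ?_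
    congr 2 <;> ring
  have e2 : ∏ j ∈ T \ I, (f (((#T : ℂ) - 1) * δ - y j + s + (#(T \ I) : ℂ) * δ))⁻¹
      = (-1) ^ #(T \ I)
        * ∏ j ∈ T \ I, (f (y j + (-(2 * (#T : ℂ) * δ) - s) + ((#I : ℂ) + 1) * δ))⁻¹ := by
    rw [← prod_const, ← prod_mul_distrib]
    refine prod_congr rfl fun j _ => ?_
    rw [neg_one_mul, ← inv_neg, ← hodd, hc]
    congr 2; ring
  have e3 : ∏ j ∈ I, (f (((#T : ℂ) - 1) * δ - y j + s + ((#(T \ I) : ℂ) + 1) * δ))⁻¹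
      = (-1) ^ #I * ∏ j ∈ I, (f (y j + (-(2 * (#T : ℂ) * δ) - s) + (#I : ℂ) * δ))⁻¹ := by
    rw [← prod_const, ← prod_mul_distrib]
    refine prod_congr rfl fun j _ => ?_
    rw [neg_one_mul, ← inv_neg, ← hodd, hc]
    congr 2; ring
  rw [base, base, Finset.sdiff_sdiff_eq_self hI, e1, e2, e3]
  have h1 : ((-1 : ℂ) ^ #(T \ I)) * (-1) ^ #(T \ I) = 1 := by
    rw [← mul_pow]; norm_num
  linear_combination ((-1) ^ #I * (∏ i ∈ I, ∏ j ∈ T \ I, f (y i - y j - δ) / f (y i - y j))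
    * (∏ j ∈ T \ I, (f (y j + (-(2 * (#T : ℂ) * δ) - s) + ((#I : ℂ) + 1) * δ))⁻¹)
    * (∏ j ∈ I, (f (y j + (-(2 * (#T : ℂ) * δ) - s) + (#I : ℂ) * δ))⁻¹)) * h1

/-- Complementation and reflection of the nodes turn a `v`-factor into a `u`-factor. -/
theorem pv_neg (hodd : ∀ t : ℂ, f (-t) = -f t) (hI : I ⊆ T) (s v : ℂ) :
    pv f δ (fun i => ((#T : ℂ) - 1) * δ - y i) T s v (T \ I) =
      (-1) ^ #T * pu f δ y T (-(2 * (#T : ℂ) * δ) - s) (v - s - (#T : ℂ) * δ) I := by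
  have hc : (#T : ℂ) = #I + #(T \ I) := by
    rw [← card_sdiff_add_card_eq_card hI]; push_cast; ring
  rw [pv, pu, Finset.sdiff_sdiff_eq_self hI, ← card_sdiff_add_card_eq_card hI, pow_add,
    card_sdiff_add_card_eq_card hI, sf_rev hodd δ v
      (δ + (-(2 * (#T : ℂ) * δ) - s) - (v - s - (#T : ℂ) * δ) + (#I : ℂ) * δ) _
      (by rw [hc]; ring)]
  have : ∏ i ∈ I, f (((#T : ℂ) - 1) * δ - y i + δ + s - v)
      = (-1) ^ #I * ∏ i ∈ I, f (y i + (v - s - (#T : ℂ) * δ)) := by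
    rw [← prod_const, ← prod_mul_distrib]
    refine prod_congr rfl fun j _ => ?_
    rw [neg_one_mul, ← hodd]
    congr 1; ring
  rw [this]; ring

/-- Complementation and reflection of the nodes turn a `u`-factor into a `v`-factor. -/
theorem pu_neg (hodd : ∀ t : ℂ, f (-t) = -f t) (hI : I ⊆ T) (s u : ℂ) :
    pu f δ (fun i => ((#T : ℂ) - 1) * δ - y i) T s u (T \ I) =
      (-1) ^ #T * pv f δ y T (-(2 * (#T : ℂ) * δ) - s) (u - s - (#T : ℂ) * δ) I := by
  have hc : (#T : ℂ) = #I + #(T \ I) := by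
    rw [← card_sdiff_add_card_eq_card hI]; push_cast; ring
  rw [pv, pu, Finset.sdiff_sdiff_eq_self hI, ← card_sdiff_add_card_eq_card hI, pow_add,
    card_sdiff_add_card_eq_card hI, sf_rev hodd δ (δ + s - u + (#(T \ I) : ℂ) * δ)
      (u - s - (#T : ℂ) * δ) _ (by rw [hc]; ring)]
  have : ∏ i ∈ T \ I, f (((#T : ℂ) - 1) * δ - y i + u)
      = (-1) ^ #(T \ I) * ∏ i ∈ T \ I,
        f (y i + δ + (-(2 * (#T : ℂ) * δ) - s) - (u - s - (#T : ℂ) * δ)) := by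
    rw [← prod_const, ← prod_mul_distrib]
    refine prod_congr rfl fun j _ => ?_
    rw [neg_one_mul, ← hodd]
    congr 1; ring
  rw [this]; ring

/-- Replacing each `I` by its complement and reflecting the nodes interchanges the two kinds of
parameters of `G3`. -/
theorem G3_neg (hodd : ∀ t : ℂ, f (-t) = -f t) (T : Finset ι)
    (s u0 u1 u2 v0 v1 v2 : ℂ) :
    G3 f δ (fun i => ((#T : ℂ) - 1) * δ - y i) T s u0 u1 u2 v0 v1 v2 =
      G3 f δ y T (-(2 * (#T : ℂ) * δ) - s)
        (v0 - s - (#T : ℂ) * δ) (v1 - s - (#T : ℂ) * δ) (v2 - s - (#T : ℂ) * δ)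
        (u0 - s - (#T : ℂ) * δ) (u1 - s - (#T : ℂ) * δ) (u2 - s - (#T : ℂ) * δ) := by
  rw [G3, G3]
  refine sum_nbij' (fun I => T \ I) (fun I => T \ I) ?_ ?_ ?_ ?_ ?_
  · exact fun I _ => mem_powerset.mpr sdiff_subset
  · exact fun I _ => mem_powerset.mpr sdiff_subset
  · exact fun I hI => Finset.sdiff_sdiff_eq_self (mem_powerset.mp hI)
  · exact fun I hI => Finset.sdiff_sdiff_eq_self (mem_powerset.mp hI)
  · intro J hJ
    obtain ⟨I, hI, rfl⟩ : ∃ I ⊆ T, J = T \ I :=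
      ⟨T \ J, sdiff_subset, (Finset.sdiff_sdiff_eq_self (mem_powerset.mp hJ)).symm⟩
    rw [Finset.sdiff_sdiff_eq_self hI, base_neg hodd hI, pv_neg hodd hI, pv_neg hodd hI, pv_neg hodd hI,
      pu_neg hodd hI, pu_neg hodd hI, pu_neg hodd hI]
    have h1 : ((-1 : ℂ) ^ #T) ^ 2 = 1 := by rw [← pow_mul, mul_comm, pow_mul]; norm_num
    have h6 : ((-1 : ℂ) ^ #T) ^ 6 = 1 := by
      rw [show (6 : ℕ) = 2 * 3 from rfl, pow_mul, h1, one_pow]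
    generalize ((-1 : ℂ) ^ #T) = S at h6 ⊢
    generalize base f δ y T (-(2 * (#T : ℂ) * δ) - s) I = B
    linear_combination (B * (pu f δ y T (-(2 * (#T : ℂ) * δ) - s) (v0 - s - (#T : ℂ) * δ) I)
      * (pu f δ y T (-(2 * (#T : ℂ) * δ) - s) (v1 - s - (#T : ℂ) * δ) I)
      * (pu f δ y T (-(2 * (#T : ℂ) * δ) - s) (v2 - s - (#T : ℂ) * δ) I)
      * (pv f δ y T (-(2 * (#T : ℂ) * δ) - s) (u0 - s - (#T : ℂ) * δ) I)
      * (pv f δ y T (-(2 * (#T : ℂ) * δ) - s) (u1 - s - (#T : ℂ) * δ) I)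
      * (pv f δ y T (-(2 * (#T : ℂ) * δ) - s) (u2 - s - (#T : ℂ) * δ) I)) * h6

/-- `G3` over all nodes does not depend on how the nodes are labelled. -/
theorem G3_equiv [Fintype ι] (σ : ι ≃ ι) (s u0 u1 u2 v0 v1 v2 : ℂ) :
    G3 f δ (y ∘ σ) univ s u0 u1 u2 v0 v1 v2 = G3 f δ y univ s u0 u1 u2 v0 v1 v2 := by
  have hp : ∀ (I : Finset ι), univ \ I.map σ.toEmbedding = (univ \ I).map σ.toEmbedding := by
    intro I
    rw [Finset.map_sdiff, map_univ_equiv]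
  rw [G3, G3]
  refine sum_bij (fun I _ => I.map σ.toEmbedding) (fun _ _ => by simp)
    (fun I _ J _ h => map_injective _ h) (fun I _ => ⟨I.map σ.symm.toEmbedding, by simp, ?_⟩) ?_
  · ext i; simp
  · intro I _
    simp only [base, pu, pv, hp, prod_map, card_map, Function.comp, Equiv.coe_toEmbedding]

end

/-! ### The multiple series as a sum over sets of nodes -/

section
variable {m : ℕ}

/-- The union of the initial segments of lengths `μ i` of the strings of lengths `α i`. -/
def seg (α μ : Fin m → ℕ) : Finset (Σ i : Fin m, Fin (α i)) :=
  univ.filter fun p => (p.2 : ℕ) < μ p.1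

theorem prod_seg {α μ : Fin m → ℕ} (hμ : ∀ i, μ i ≤ α i) (g : Fin m → ℕ → ℂ) :
    ∏ p ∈ seg α μ, g p.1 p.2 = ∏ i, ∏ l ∈ range (μ i), g i l := by
  rw [seg, prod_filter, Fintype.prod_sigma]
  refine prod_congr rfl fun i _ => ?_
  rw [Fin.prod_univ_eq_prod_range (fun l => if l < μ i then g i l else 1) (α i), ← prod_filter]
  refine prod_congr ?_ fun _ _ => rfl
  have := hμ i
  ext l; simp only [mem_filter, mem_range]; omega

theorem prod_seg_compl {α μ : Fin m → ℕ} (g : Fin m → ℕ → ℂ) :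
    ∏ p ∈ univ \ seg α μ, g p.1 p.2 = ∏ i, ∏ l ∈ range (α i - μ i), g i (μ i + l) := by
  rw [seg, ← filter_not, prod_filter, Fintype.prod_sigma]
  refine prod_congr rfl fun i _ => ?_
  rw [Fin.prod_univ_eq_prod_range (fun l => if ¬ l < μ i then g i l else 1) (α i), ← prod_filter,
    ← prod_Ico_eq_prod_range]
  refine prod_congr ?_ fun _ _ => rfl
  ext l; simp only [mem_filter, mem_range, mem_Ico]; omega

theorem card_seg {α μ : Fin m → ℕ} (hμ : ∀ i, μ i ≤ α i) : #(seg α μ) = ∑ i, μ i := by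
  rw [seg, card_filter, Fintype.sum_sigma]
  refine sum_congr rfl fun i _ => ?_
  rw [Fin.sum_univ_eq_sum_range (fun l => if l < μ i then 1 else 0) (α i), ← card_filter]
  have := hμ i
  rw [show (range (α i)).filter (fun l => l < μ i) = range (μ i) by
    ext l; simp only [mem_filter, mem_range]; omega, card_range]

theorem card_sigma' (α : Fin m → ℕ) :
    #(univ : Finset (Σ i : Fin m, Fin (α i))) = ∑ i, α i := by simp

theorem seg_inj {α μ ν : Fin m → ℕ} (hμ : ∀ i, μ i ≤ α i) (hν : ∀ i, ν i ≤ α i)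
    (h : seg α μ = seg α ν) : μ = ν := by
  have key : ∀ {μ ν : Fin m → ℕ}, (∀ i, μ i ≤ α i) → (∀ i, ν i ≤ α i) → seg α μ = seg α ν →
      ∀ i, μ i ≤ ν i := by
    intro μ ν hμ hν h i
    by_contra hlt
    push Not at hlt
    have h1 : (⟨i, ⟨ν i, lt_of_lt_of_le hlt (hμ i)⟩⟩ : Σ i : Fin m, Fin (α i)) ∈ seg α μ := by
      simpa [seg] using hlt
    rw [h] at h1
    simp [seg] at h1
  exact funext fun i => le_antisymm (key hμ hν h i) (key hν hμ h.symm i)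

/-- A set of nodes which is not a union of initial segments contains a node whose predecessor
in its string is missing. -/
theorem exists_gap {α : Fin m → ℕ} (I : Finset (Σ i : Fin m, Fin (α i)))
    (hI : ∀ μ : Fin m → ℕ, (∀ i, μ i ≤ α i) → seg α μ ≠ I) :
    ∃ p ∈ I, ∃ q ∉ I, p.1 = q.1 ∧ (p.2 : ℕ) = q.2 + 1 := by
  classical
  by_contra hno
  push Not at hno
  have hex : ∀ i, ∃ l, ∀ h : l < α i, (⟨i, ⟨l, h⟩⟩ : Σ i : Fin m, Fin (α i)) ∉ I :=
    fun i => ⟨α i, fun h => absurd h (lt_irrefl _)⟩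
  refine hI (fun i => Nat.find (hex i))
    (fun i => Nat.find_min' (hex i) fun h => absurd h (lt_irrefl _)) ?_
  ext ⟨i, l, hl⟩
  simp only [seg, mem_filter, mem_univ, true_and]
  constructor
  · intro h
    have := Nat.find_min (hex i) h
    push Not at this
    exact this.2
  · intro h
    by_contra hle
    push Not at hle
    have : ∀ k, ∀ hk : Nat.find (hex i) + k < α i,
        (⟨i, ⟨Nat.find (hex i) + k, hk⟩⟩ : Σ i : Fin m, Fin (α i)) ∉ I := by
      intro k
      induction k with
      | zero => exact fun hk => Nat.find_spec (hex i) hk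
      | succ k ih =>
        intro hk hmem
        exact hno _ hmem _ (ih (by omega)) rfl (by simp; omega)
    obtain ⟨k, hk⟩ := Nat.exists_eq_add_of_le hle
    generalize Nat.find (hex i) = n at hk this
    subst hk
    exact this k hl h

/-- A product over all pairs, split into its diagonal part and the unordered pairs. -/
theorem prod_pairs (g : Fin m → Fin m → ℂ) :
    ∏ i, ∏ j, g i j = (∏ i, g i i) *
      ∏ i, ∏ j ∈ univ.filter (fun j => i < j), g i j * g j i := by
  have h1 : ∀ i, ∏ j, g i j = g i i * ((∏ j ∈ univ.filter (fun j => i < j), g i j)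
      * ∏ j ∈ univ.filter (fun j => j < i), g i j) := by
    intro i
    rw [← prod_filter_mul_prod_filter_not univ (fun j => i < j)]
    rw [show (univ.filter fun j => ¬ i < j) = insert i (univ.filter fun j => j < i) by
      ext j; simp only [mem_filter, mem_univ, true_and, mem_insert]; omega, prod_insert (by simp)]
    ring
  have h2 : ∏ i, ∏ j ∈ univ.filter (fun j => j < i), g i j
      = ∏ i, ∏ j ∈ univ.filter (fun j => i < j), g j i :=
    prod_comm' (by simp)
  simp only [h1, prod_mul_distrib, h2]

theorem sf_ne_zero {f : ℂ → ℂ} {δ x : ℂ} {k : ℕ} (h : ∀ l < k, f (x + (l : ℂ) * δ) ≠ 0) :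
    sf f δ x k ≠ 0 :=
  prod_ne_zero_iff.mpr fun l hl => h l (mem_range.mp hl)

/-- Both sides arise from splitting one shifted factorial of length `a + b + 1` in two ways. -/
theorem sf_pair {f : ℂ → ℂ} (hodd : ∀ t : ℂ, f (-t) = -f t) (δ r : ℂ) (a b : ℕ) :
    sf f δ (r - (b : ℂ) * δ) a * sf f δ (-r - (a : ℂ) * δ) b * f (r + ((a : ℂ) - b) * δ) =
      f r * sf f δ (r + δ) a * sf f δ (-r + δ) b := by
  have h1 : sf f δ (r - (b : ℂ) * δ) (b + (a + 1)) =
      (-1) ^ b * sf f δ (-r + δ) b * (f r * sf f δ (r + δ) a) := by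
    rw [sf_add, sf_succ', sub_add_cancel, sf_rev hodd δ _ (-r + δ) b (by ring)]
  have h2 : sf f δ (r - (b : ℂ) * δ) (a + (b + 1)) =
      sf f δ (r - (b : ℂ) * δ) a * (f (r + ((a : ℂ) - b) * δ) *
        ((-1) ^ b * sf f δ (-r - (a : ℂ) * δ) b)) := by
    rw [sf_add, sf_succ', sf_rev hodd δ _ (-r - (a : ℂ) * δ) b (by ring)]
    congr 3; ring
  rw [show b + (a + 1) = a + (b + 1) by omega, h2] at h1
  have h3 : ((-1 : ℂ) ^ b) * (-1) ^ b = 1 := by rw [← mul_pow]; norm_num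
  linear_combination (-1) ^ b * h1 - (sf f δ (r - (b : ℂ) * δ) a * sf f δ (-r - (a : ℂ) * δ) b
    * f (r + ((a : ℂ) - b) * δ) - f r * sf f δ (r + δ) a * sf f δ (-r + δ) b) * h3

theorem telescope (g : ℕ → ℂ) (n : ℕ) (h : ∀ l ≤ n, g l ≠ 0) :
    ∏ l ∈ range n, g (l + 1) / g l = g n / g 0 := by
  induction n with
  | zero => simp [h 0 le_rfl]
  | succ n ih =>
    rw [prod_range_succ, ih fun l hl => h l (by omega)]
    have := h n (by omega)
    field_simp

variable {f : ℂ → ℂ} {δ : ℂ} {x : Fin m → ℂ} {α μ : Fin m → ℕ}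

/-- The nodes `x i + l δ`, `l < α i`, arranged in `m` strings with step `δ`. -/
def nodes (δ : ℂ) (x : Fin m → ℂ) (α : Fin m → ℕ) : (Σ i : Fin m, Fin (α i)) → ℂ :=
  fun p => x p.1 + ((p.2 : ℕ) : ℂ) * δ

theorem diff_ne (hδ : ∀ k : ℤ, k ≠ 0 → f ((k : ℂ) * δ) ≠ 0)
    (hd : ∀ i j, i ≠ j → ∀ k : ℤ, f (x i - x j + (k : ℂ) * δ) ≠ 0) (i j : Fin m) (k : ℤ)
    (hk : i = j → k ≠ 0) : f (x i - x j + (k : ℂ) * δ) ≠ 0 := by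
  by_cases h : i = j
  · subst h
    rw [sub_self, zero_add]
    exact hδ k (hk rfl)
  · exact hd i j h k

/-- For a union of initial segments the double product in `base` telescopes along each string. -/
theorem cross_seg (hδ : ∀ k : ℤ, k ≠ 0 → f ((k : ℂ) * δ) ≠ 0)
    (hd : ∀ i j, i ≠ j → ∀ k : ℤ, f (x i - x j + (k : ℂ) * δ) ≠ 0) (hμ : ∀ i, μ i ≤ α i) :
    ∏ p ∈ seg α μ, ∏ q ∈ univ \ seg α μ,
      f (nodes δ x α p - nodes δ x α q - δ) / f (nodes δ x α p - nodes δ x α q)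
    = ∏ i, ∏ j, sf f δ (x i - x j - (α j : ℂ) * δ) (μ i)
        / sf f δ (x i - x j - (μ j : ℂ) * δ) (μ i) := by
  have h1 : ∀ p : Σ i : Fin m, Fin (α i), ∏ q ∈ univ \ seg α μ,
      f (nodes δ x α p - nodes δ x α q - δ) / f (nodes δ x α p - nodes δ x α q)
      = ∏ j, ∏ l' ∈ range (α j - μ j), f (nodes δ x α p - (x j + ((μ j + l' : ℕ) : ℂ) * δ) - δ)
          / f (nodes δ x α p - (x j + ((μ j + l' : ℕ) : ℂ) * δ)) := fun p =>
    prod_seg_compl fun j l' => f (nodes δ x α p - (x j + (l' : ℂ) * δ) - δ)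
          / f (nodes δ x α p - (x j + (l' : ℂ) * δ))
  simp only [h1]
  rw [show ∏ p ∈ seg α μ, ∏ j, ∏ l' ∈ range (α j - μ j),
      f (nodes δ x α p - (x j + ((μ j + l' : ℕ) : ℂ) * δ) - δ)
          / f (nodes δ x α p - (x j + ((μ j + l' : ℕ) : ℂ) * δ)) = _ from
    prod_seg hμ fun i l => ∏ j, ∏ l' ∈ range (α j - μ j),
      f (x i + (l : ℂ) * δ - (x j + ((μ j + l' : ℕ) : ℂ) * δ) - δ)
          / f (x i + (l : ℂ) * δ - (x j + ((μ j + l' : ℕ) : ℂ) * δ))]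
  refine prod_congr rfl fun i _ => ?_
  rw [prod_comm]
  refine prod_congr rfl fun j _ => ?_
  rw [sf, sf, ← prod_div_distrib]
  refine prod_congr rfl fun l hl => ?_
  rw [mem_range] at hl
  have ht := telescope (fun n => f (x i + (l : ℂ) * δ - (x j + ((μ j + n : ℕ) : ℂ) * δ)))
    (α j - μ j) fun n hn => by
      have := diff_ne hδ hd i j ((l : ℤ) - (μ j + n : ℕ)) (by rintro rfl; omega)
      convert this using 2
      push_cast; ring
  rw [Nat.add_sub_cancel' (hμ j)] at ht
  trans f (x i + (l : ℂ) * δ - (x j + (α j : ℂ) * δ))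
    / f (x i + (l : ℂ) * δ - (x j + ((μ j + 0 : ℕ) : ℂ) * δ))
  · rw [← ht]
    refine prod_congr rfl fun l' _ => ?_
    congr 2; push_cast; ring
  · congr 2
    · ring
    · push_cast; ring

/-- Rewriting of the cross product in terms of the difference products of the multiple series. -/
theorem del_seg (hodd : ∀ t : ℂ, f (-t) = -f t) (hδ : ∀ k : ℤ, k ≠ 0 → f ((k : ℂ) * δ) ≠ 0)
    (hd : ∀ i j, i ≠ j → ∀ k : ℤ, f (x i - x j + (k : ℂ) * δ) ≠ 0) (A : Fin m → Fin m → ℂ) :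
    (-1) ^ (∑ i, μ i) * ∏ i, ∏ j, A i j / sf f δ (x i - x j - (μ j : ℂ) * δ) (μ i) =
      Del f (fun i => x i + (μ i : ℂ) * δ) / Del f x
        * ∏ j, ∏ i, A i j / sf f δ (x i - x j + δ) (μ i) := by
  have key : (∏ i, ∏ j, sf f δ (x i - x j - (μ j : ℂ) * δ) (μ i))
        * Del f (fun i => x i + (μ i : ℂ) * δ)
      = (-1) ^ (∑ i, μ i) * (∏ i, ∏ j, sf f δ (x i - x j + δ) (μ i)) * Del f x := by
    have e1 : ∏ i, sf f δ (x i - x i - (μ i : ℂ) * δ) (μ i)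
        = (-1) ^ (∑ i, μ i) * ∏ i, sf f δ (x i - x i + δ) (μ i) := by
      rw [← prod_pow_eq_pow_sum, ← prod_mul_distrib]
      exact prod_congr rfl fun i _ => sf_rev hodd _ _ _ _ (by ring)
    have e2 : (∏ i, ∏ j ∈ univ.filter (fun j => i < j),
          sf f δ (x i - x j - (μ j : ℂ) * δ) (μ i) * sf f δ (x j - x i - (μ i : ℂ) * δ) (μ j))
          * Del f (fun i => x i + (μ i : ℂ) * δ)
        = (∏ i, ∏ j ∈ univ.filter (fun j => i < j),
          sf f δ (x i - x j + δ) (μ i) * sf f δ (x j - x i + δ) (μ j)) * Del f x := by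
      rw [Del, Del, ← prod_mul_distrib, ← prod_mul_distrib]
      refine prod_congr rfl fun i _ => ?_
      rw [← prod_mul_distrib, ← prod_mul_distrib]
      refine prod_congr rfl fun j _ => ?_
      have h := sf_pair hodd δ (x i - x j) (μ i) (μ j)
      rw [show x i + (μ i : ℂ) * δ - (x j + (μ j : ℂ) * δ)
          = x i - x j + ((μ i : ℂ) - μ j) * δ by ring, ← neg_sub (x i) (x j), h]
      ring
    rw [prod_pairs, prod_pairs, e1, mul_assoc, e2]
    ring
  have hP : ∏ i, ∏ j, sf f δ (x i - x j - (μ j : ℂ) * δ) (μ i) ≠ 0 := by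
    refine prod_ne_zero_iff.mpr fun i _ => prod_ne_zero_iff.mpr fun j _ => sf_ne_zero fun l hl => ?_
    convert diff_ne hδ hd i j ((l : ℤ) - μ j) (by rintro rfl; omega) using 2
    push_cast; ring
  have hQ : ∏ i, ∏ j, sf f δ (x i - x j + δ) (μ i) ≠ 0 := by
    refine prod_ne_zero_iff.mpr fun i _ => prod_ne_zero_iff.mpr fun j _ => sf_ne_zero fun l hl => ?_
    convert diff_ne hδ hd i j ((l : ℤ) + 1) (by rintro rfl; omega) using 2
    push_cast; ring
  have hD : Del f x ≠ 0 := by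
    refine prod_ne_zero_iff.mpr fun i _ => prod_ne_zero_iff.mpr fun j hj => ?_
    have := hd i j (mem_filter.mp hj).2.ne 0
    simpa using this
  rw [prod_comm (f := fun j i => A i j / sf f δ (x i - x j + δ) (μ i))]
  simp only [prod_div_distrib]
  have h3 : ((-1 : ℂ) ^ (∑ i, μ i)) * (-1) ^ (∑ i, μ i) = 1 := by rw [← mul_pow]; norm_num
  generalize Del f (fun i => x i + (μ i : ℂ) * δ) = D' at key ⊢
  generalize Del f x = D at key hD ⊢
  generalize ∏ i, ∏ j, sf f δ (x i - x j - (μ j : ℂ) * δ) (μ i) = P at key hP ⊢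
  generalize ∏ i, ∏ j, sf f δ (x i - x j + δ) (μ i) = Q at key hQ ⊢
  field_simp
  linear_combination (-(∏ i, ∏ j, A i j)) * key

/-- The inverse brackets in `base` along one string, in terms of shifted factorials. -/
theorem inv_seg (z : ℂ) (hz : ∀ k : ℕ, f (z + (k : ℂ) * δ) ≠ 0) {a n : ℕ} (M : ℕ) (hn : n ≤ a) :
    (∏ l ∈ range n, (f (z + (M : ℂ) * δ + (l : ℂ) * δ))⁻¹)
      * ∏ l ∈ range (a - n), (f (z + ((M + n + 1 : ℕ) : ℂ) * δ + (l : ℂ) * δ))⁻¹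
    = (sf f δ (δ + z) a)⁻¹ * (f (z + ((M + n : ℕ) : ℂ) * δ) / f z
        * (sf f δ z M / sf f δ (δ + z + (a : ℂ) * δ) M)) := by
  have hs : ∀ k n : ℕ, sf f δ (z + (k : ℂ) * δ) n ≠ 0 := fun k n => sf_ne_zero fun l _ => by
    convert hz (k + l) using 2; push_cast; ring
  rw [prod_inv_distrib, prod_inv_distrib]
  change (sf f δ _ n)⁻¹ * (sf f δ _ (a - n))⁻¹ = _
  have e1 : sf f δ (z + (M : ℂ) * δ) (n + ((a - n) + 1))
      = sf f δ (z + (M : ℂ) * δ) n * (f (z + ((M + n : ℕ) : ℂ) * δ)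
        * sf f δ (z + ((M + n + 1 : ℕ) : ℂ) * δ) (a - n)) := by
    rw [sf_add, sf_succ']
    congr 3 <;> · push_cast; ring
  have e2 : sf f δ z (1 + (a + M))
      = f z * (sf f δ (δ + z) a * sf f δ (δ + z + (a : ℂ) * δ) M) := by
    rw [add_comm 1, sf_succ', sf_add, add_comm z δ]
  have e3 : sf f δ z (M + (a + 1)) = sf f δ z M * sf f δ (z + (M : ℂ) * δ) (a + 1) := sf_add ..
  rw [show n + (a - n + 1) = a + 1 by omega] at e1
  rw [show M + (a + 1) = 1 + (a + M) by omega, e2, e1] at e3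
  have n1 := hs M n
  have n2 := hs (M + n + 1) (a - n)
  have n3 : sf f δ (δ + z) a ≠ 0 := by
    have := hs 1 a; rwa [Nat.cast_one, one_mul, add_comm z δ] at this
  have n4 : sf f δ (δ + z + (a : ℂ) * δ) M ≠ 0 := by
    have := hs (a + 1) M
    rwa [show z + ((a + 1 : ℕ) : ℂ) * δ = δ + z + (a : ℂ) * δ by push_cast; ring] at this
  have n5 : f z ≠ 0 := by simpa using hz 0
  generalize sf f δ (z + (M : ℂ) * δ) n = X1 at e3 n1 ⊢
  generalize sf f δ (z + ((M + n + 1 : ℕ) : ℂ) * δ) (a - n) = X2 at e3 n2 ⊢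
  generalize sf f δ (δ + z) a = X3 at e3 n3 ⊢
  generalize sf f δ (δ + z + (a : ℂ) * δ) M = X4 at e3 n4 ⊢
  generalize f (z + ((M + n : ℕ) : ℂ) * δ) = X5 at e3 ⊢
  field_simp
  linear_combination e3

/-- On a union of initial segments, `base` is a constant times the part of the summand of the
multiple series that does not involve `u` and `v`. -/
theorem base_seg (hodd : ∀ t : ℂ, f (-t) = -f t) (hδ : ∀ k : ℤ, k ≠ 0 → f ((k : ℂ) * δ) ≠ 0)
    (hd : ∀ i j, i ≠ j → ∀ k : ℤ, f (x i - x j + (k : ℂ) * δ) ≠ 0) (hμ : ∀ i, μ i ≤ α i)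
    {s : ℂ} (hs : ∀ i, ∀ k : ℕ, f (x i + s + (k : ℂ) * δ) ≠ 0) {a : Fin m → ℂ}
    (ha : ∀ i, a i = -(α i : ℂ) * δ) :
    base f δ (nodes δ x α) univ s (seg α μ) =
      (∏ i, (sf f δ (δ + s + x i) (α i))⁻¹) *
      ((Del f (fun i => x i + (μ i : ℂ) * δ) / Del f x)
    * (∏ i, f (x i + s + (((∑ j, μ j) + μ i : ℕ) : ℂ) * δ) / f (x i + s))
    * (∏ j, (sf f δ (s + x j) (∑ i, μ i) / sf f δ (δ + s + x j - a j) (∑ i, μ i))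
        * ∏ i, sf f δ (x i - x j + a j) (μ i) / sf f δ (x i - x j + δ) (μ i))) := by
  have h1 := cross_seg hδ hd hμ
  have h2 := del_seg hodd hδ hd (μ := μ) fun i j => sf f δ (x i - x j - (α j : ℂ) * δ) (μ i)
  have h3 : (∏ j ∈ seg α μ, (f (nodes δ x α j + s + (#(seg α μ) : ℂ) * δ))⁻¹)
      * ∏ j ∈ univ \ seg α μ, (f (nodes δ x α j + s + ((#(seg α μ) : ℂ) + 1) * δ))⁻¹
      = ∏ i, (sf f δ (δ + s + x i) (α i))⁻¹ *
        (f (x i + s + (((∑ j, μ j) + μ i : ℕ) : ℂ) * δ) / f (x i + s)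
          * (sf f δ (s + x i) (∑ i, μ i) / sf f δ (δ + s + x i - a i) (∑ i, μ i))) := by
    rw [show ∏ j ∈ seg α μ, (f (nodes δ x α j + s + (#(seg α μ) : ℂ) * δ))⁻¹ = _ from
      prod_seg hμ fun i l => (f (x i + (l : ℂ) * δ + s + (#(seg α μ) : ℂ) * δ))⁻¹,
      show ∏ j ∈ univ \ seg α μ, (f (nodes δ x α j + s + ((#(seg α μ) : ℂ) + 1) * δ))⁻¹ = _ from
      prod_seg_compl fun i l => (f (x i + (l : ℂ) * δ + s + ((#(seg α μ) : ℂ) + 1) * δ))⁻¹,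
      ← prod_mul_distrib, card_seg hμ]
    refine prod_congr rfl fun i _ => ?_
    have h := inv_seg (x i + s) (hs i) (∑ i, μ i) (hμ i)
    rw [ha, show δ + s + x i - -(α i : ℂ) * δ = δ + (x i + s) + (α i : ℂ) * δ by ring,
      show δ + s + x i = δ + (x i + s) by ring, add_comm s (x i), ← h]
    congr 1
    · refine prod_congr rfl fun l _ => ?_
      congr 2; ring
    · refine prod_congr rfl fun l _ => ?_
      congr 2; push_cast; ring
  rw [base, h1, h3, card_seg hμ, h2]
  have h4 : ∀ i j, sf f δ (x i - x j + a j) (μ i) = sf f δ (x i - x j - (α j : ℂ) * δ) (μ i) :=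
    fun i j => by rw [ha, neg_mul, ← sub_eq_add_neg]
  simp only [h4, prod_mul_distrib]
  ring

theorem pu_seg (hμ : ∀ i, μ i ≤ α i) (s u : ℂ)
    (h : ∀ l < ∑ i, α i, f (δ + s - u + (l : ℂ) * δ) ≠ 0) :
    pu f δ (nodes δ x α) univ s u (seg α μ) =
      sf f δ (δ + s - u) (∑ i, α i) *
        ((sf f δ (δ + s - u) (∑ i, μ i))⁻¹ * ∏ i, sf f δ (x i + u) (μ i)) := by
  have hle : ∑ i, μ i ≤ ∑ i, α i := sum_le_sum fun i _ => hμ i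
  have hn : sf f δ (δ + s - u) (∑ i, μ i) ≠ 0 := sf_ne_zero fun l hl => h l (by omega)
  have h1 : ∏ p ∈ seg α μ, f (nodes δ x α p + u) = ∏ i, sf f δ (x i + u) (μ i) := by
    rw [show ∏ p ∈ seg α μ, f (nodes δ x α p + u) = _ from
      prod_seg hμ fun i l => f (x i + (l : ℂ) * δ + u)]
    refine prod_congr rfl fun i _ => prod_congr rfl fun l _ => ?_
    congr 1; ring
  rw [pu, card_sdiff_of_subset (subset_univ _), h1, card_seg hμ, card_sigma']
  obtain ⟨n, hL⟩ := Nat.exists_eq_add_of_le hle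
  rw [hL, sf_add, Nat.add_sub_cancel_left]
  field_simp

theorem pv_seg (hμ : ∀ i, μ i ≤ α i) (s v : ℂ)
    (h : ∀ i, ∀ l < α i, f (x i + δ + s - v + (l : ℂ) * δ) ≠ 0) :
    pv f δ (nodes δ x α) univ s v (seg α μ) =
      (∏ i, sf f δ (x i + δ + s - v) (α i)) *
        (sf f δ v (∑ i, μ i) * (∏ i, (sf f δ (x i + δ + s - v) (μ i))⁻¹)) := by
  have h1 : ∏ p ∈ univ \ seg α μ, f (nodes δ x α p + δ + s - v)
      = ∏ i, sf f δ (x i + δ + s - v) (α i) * (sf f δ (x i + δ + s - v) (μ i))⁻¹ := by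
    rw [show ∏ p ∈ univ \ seg α μ, f (nodes δ x α p + δ + s - v) = _ from
      prod_seg_compl fun i l => f (x i + (l : ℂ) * δ + δ + s - v)]
    refine prod_congr rfl fun i _ => ?_
    have hn : sf f δ (x i + δ + s - v) (μ i) ≠ 0 :=
      sf_ne_zero fun l hl => h i l (lt_of_lt_of_le hl (hμ i))
    obtain ⟨n, hL⟩ := Nat.exists_eq_add_of_le (hμ i)
    rw [hL, sf_add, Nat.add_sub_cancel_left]
    rw [mul_right_comm, mul_inv_cancel₀ hn, one_mul]
    refine prod_congr rfl fun l _ => ?_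
    congr 1; push_cast; ring
  rw [pv, h1, card_seg hμ, prod_mul_distrib]
  ring

theorem Eterm_zero (hodd : ∀ t : ℂ, f (-t) = -f t) {n : ℕ} {a : Fin m → ℂ}
    (ha : ∀ i, a i = -(α i : ℂ) * δ) (s : ℂ) (u v : Fin n → ℂ) (j : Fin m) (hj : α j < μ j) :
    Eterm f δ a x s u v μ = 0 := by
  have : sf f δ (x j - x j + a j) (μ j) = 0 :=
    prod_eq_zero (mem_range.mpr hj) (by rw [ha]; ring_nf; exact odd_zero hodd)
  rw [Eterm, prod_eq_zero (mem_univ j) (f := fun j =>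
    (sf f δ (s + x j) (∑ i, μ i) / sf f δ (δ + s + x j - a j) (∑ i, μ i))
        * ∏ i, sf f δ (x i - x j + a j) (μ i) / sf f δ (x i - x j + δ) (μ i)), mul_zero, zero_mul]
  rw [prod_eq_zero (mem_univ j), mul_zero]
  rw [this, zero_div]

/-- For `a i = -α i δ` the multiple series is the finite sum over `μ ≤ α`. -/
theorem Evw_eq_sum (hodd : ∀ t : ℂ, f (-t) = -f t) {n : ℕ} {a : Fin m → ℂ}
    (ha : ∀ i, a i = -(α i : ℂ) * δ) (s : ℂ) (u v : Fin n → ℂ) :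
    Evw f δ a x s u v
      = ∑ μ ∈ Fintype.piFinset fun i => range (α i + 1), Eterm f δ a x s u v μ := by
  refine tsum_eq_sum fun μ hμ => ?_
  simp only [Fintype.mem_piFinset, mem_range, not_forall, not_lt] at hμ
  obtain ⟨j, hj⟩ := hμ
  exact Eterm_zero hodd ha s u v j (by omega)

/-- The factor, independent of the summation index, that clears the denominators of the
multiple series. -/
noncomputable def nrm (f : ℂ → ℂ) (δ : ℂ) (x : Fin m → ℂ) (α : Fin m → ℕ)
    (s u0 u1 u2 v0 v1 v2 : ℂ) : ℂ :=
  (∏ i, (sf f δ (δ + s + x i) (α i))⁻¹) *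
    (sf f δ (δ + s - u0) (∑ i, α i) * sf f δ (δ + s - u1) (∑ i, α i)
      * sf f δ (δ + s - u2) (∑ i, α i)) *
    ((∏ i, sf f δ (x i + δ + s - v0) (α i)) * (∏ i, sf f δ (x i + δ + s - v1) (α i))
      * (∏ i, sf f δ (x i + δ + s - v2) (α i)))

/-- The subset sum over the strings is the normalised multiple series: sets that are not unions
of initial segments have weight zero, because a node and its missing predecessor give `f 0 = 0`. -/
theorem G3_nodes (hodd : ∀ t : ℂ, f (-t) = -f t) (hδ : ∀ k : ℤ, k ≠ 0 → f ((k : ℂ) * δ) ≠ 0)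
    (hd : ∀ i j, i ≠ j → ∀ k : ℤ, f (x i - x j + (k : ℂ) * δ) ≠ 0)
    {s : ℂ} (hs : ∀ i, ∀ k : ℕ, f (x i + s + (k : ℂ) * δ) ≠ 0) {a : Fin m → ℂ}
    (ha : ∀ i, a i = -(α i : ℂ) * δ) {u0 u1 u2 v0 v1 v2 : ℂ}
    (hu0 : ∀ l < ∑ i, α i, f (δ + s - u0 + (l : ℂ) * δ) ≠ 0)
    (hu1 : ∀ l < ∑ i, α i, f (δ + s - u1 + (l : ℂ) * δ) ≠ 0)
    (hu2 : ∀ l < ∑ i, α i, f (δ + s - u2 + (l : ℂ) * δ) ≠ 0)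
    (hv0 : ∀ i, ∀ l < α i, f (x i + δ + s - v0 + (l : ℂ) * δ) ≠ 0)
    (hv1 : ∀ i, ∀ l < α i, f (x i + δ + s - v1 + (l : ℂ) * δ) ≠ 0)
    (hv2 : ∀ i, ∀ l < α i, f (x i + δ + s - v2 + (l : ℂ) * δ) ≠ 0) :
    G3 f δ (nodes δ x α) univ s u0 u1 u2 v0 v1 v2
      = nrm f δ x α s u0 u1 u2 v0 v1 v2 * Evw f δ a x s ![u0, u1, u2] ![v0, v1, v2] := by
  rw [Evw_eq_sum hodd ha, G3, mul_sum]
  symm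
  refine sum_of_injOn (seg α) ?_ ?_ ?_ ?_
  · intro μ hμ ν hν h
    simp only [mem_coe, Fintype.mem_piFinset, mem_range] at hμ hν
    exact seg_inj (fun i => by have := hμ i; omega) (fun i => by have := hν i; omega) h
  · intro μ _
    simp
  · intro I _ hI
    obtain ⟨p, hp, q, hq, h1, h2⟩ := exists_gap I fun μ hμ h => hI ⟨μ, by
      simpa [Nat.lt_succ_iff] using hμ, h⟩
    have : base f δ (nodes δ x α) univ s I = 0 := by
      rw [base, prod_eq_zero hp, mul_zero, zero_mul]
      rw [prod_eq_zero (mem_sdiff.mpr ⟨mem_univ q, hq⟩)]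
      have hx : x p.1 = x q.1 := congrArg x h1
      rw [nodes, nodes, hx, h2, show x q.1 + (((q.2 : ℕ) + 1 : ℕ) : ℂ) * δ
        - (x q.1 + ((q.2 : ℕ) : ℂ) * δ) - δ = 0 by push_cast; ring, odd_zero hodd, zero_div]
    rw [this]; ring
  · intro μ hμ
    have hμ' : ∀ i, μ i ≤ α i := by simpa [Nat.lt_succ_iff] using hμ
    rw [base_seg hodd hδ hd hμ' hs ha, pv_seg hμ' s v0 hv0, pv_seg hμ' s v1 hv1,
      pv_seg hμ' s v2 hv2, pu_seg hμ' s u0 hu0, pu_seg hμ' s u1 hu1, pu_seg hμ' s u2 hu2, Eterm,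
      Fin.prod_univ_three, nrm]
    have q2 : ∀ w0 w1 w2 : ℂ, ![w0, w1, w2] 2 = w2 := fun _ _ _ => rfl
    simp only [Matrix.cons_val_zero, Matrix.cons_val_one, q2, div_eq_mul_inv, prod_mul_distrib]
    ring
end

/-! ### The transformation for generic `x` -/

section
variable {m : ℕ} {f : ℂ → ℂ} {δ : ℂ} {x : Fin m → ℂ} {α : Fin m → ℕ}

/-- The prefactor relating the two series in the transformation. -/
noncomputable def pref (f : ℂ → ℂ) (δ : ℂ) (x : Fin m → ℂ) (α : Fin m → ℕ) (s d0 d1 d2 : ℂ) : ℂ :=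
  (∏ i, sf f δ (δ + s + x i - d0) (α i) * sf f δ (δ + s + x i - d1) (α i)
          / (sf f δ (δ + s + x i) (α i) * sf f δ (δ + s + x i - d0 - d1) (α i)))
        * (∏ i, sf f δ (δ + s + x i - d2) (α i)
              * sf f δ (δ + s + x i - d0 - d1 - d2) (α i)
            / (sf f δ (δ + s + x i - d0 - d2) (α i)
              * sf f δ (δ + s + x i - d1 - d2) (α i)))

/-- Genericity of `x` relative to a group `A` of parameters, ensuring `Gen` for the nodes. -/
structure GenX (f : ℂ → ℂ) (δ : ℂ) (A : AddSubgroup ℂ) (x : Fin m → ℂ) : Prop where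
  one : ∀ i, ∀ c ∈ A, f (x i + c) ≠ 0
  two : ∀ i j, ∀ c ∈ A, f (x i + x j + c) ≠ 0
  diff : ∀ i j, i ≠ j → ∀ k : ℤ, f (x i - x j + (k : ℂ) * δ) ≠ 0

theorem nat_mul_mem {A : AddSubgroup ℂ} (hδ : δ ∈ A) (n : ℕ) : (n : ℂ) * δ ∈ A := by
  rw [← nsmul_eq_mul]; exact A.nsmul_mem hδ n

theorem GenX.nodes {A : AddSubgroup ℂ} (hδ : ∀ k : ℤ, k ≠ 0 → f ((k : ℂ) * δ) ≠ 0) (hA : δ ∈ A)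
    (h : GenX f δ A x) (α : Fin m → ℕ) : Gen f A (nodes δ x α) where
  one p c hc := by
    rw [_root_.nodes, add_assoc]
    exact h.one _ _ (A.add_mem (nat_mul_mem hA _) hc)
  two p r _ c hc := by
    rw [_root_.nodes, _root_.nodes, show x p.1 + ((p.2 : ℕ) : ℂ) * δ + (x r.1 + ((r.2 : ℕ) : ℂ) * δ) + c
      = x p.1 + x r.1 + (((p.2 : ℕ) : ℂ) * δ + ((r.2 : ℕ) : ℂ) * δ + c) by ring]
    exact h.two _ _ _ (A.add_mem (A.add_mem (nat_mul_mem hA _) (nat_mul_mem hA _)) hc)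
  diff p r hpr := by
    rw [_root_.nodes, _root_.nodes, show x p.1 + ((p.2 : ℕ) : ℂ) * δ - (x r.1 + ((r.2 : ℕ) : ℂ) * δ)
      = x p.1 - x r.1 + (((p.2 : ℕ) - (r.2 : ℕ) : ℤ) : ℂ) * δ by push_cast; ring]
    refine diff_ne hδ h.diff _ _ _ fun e => ?_
    obtain ⟨i, l⟩ := p
    obtain ⟨j, l'⟩ := r
    obtain rfl : i = j := e
    intro h0
    exact hpr (by congr 1; ext; simp only at h0; omega)

/-- The transformation for generic `x`. Up to normalisation both sides are subset sums; the nodes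
of the left side are the reflected nodes of the right side, so the two sums are related by
`G3_neg` and `swap_all`. -/
theorem generic_case (hodd : ∀ t : ℂ, f (-t) = -f t) (hR : Riem f)
    (hδ : ∀ k : ℤ, k ≠ 0 → f ((k : ℂ) * δ) ≠ 0) {a : Fin m → ℂ}
    {s c0 c1 c2 d0 d1 d2 : ℂ} (ha : ∀ i, a i = -(α i : ℂ) * δ)
    (hbal : (∑ i, a i) + (c0 + c1 + c2 + d0 + d1 + d2) = 2 * δ + 3 * s)
    {st : ℂ} (hst : st = δ + 2 * s - c0 - c1 - c2)
    {ct0 ct1 ct2 : ℂ} (hct0 : ct0 = δ + s - c1 - c2) (hct1 : ct1 = δ + s - c0 - c2)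
    (hct2 : ct2 = δ + s - c0 - c1)
    {xt : Fin m → ℂ} (hxt : ∀ i, xt i = a i - x i - ∑ j, a j)
    (h5 : ∀ (k : Fin 3) (l : ℕ), l < ∑ i, α i →
      f (δ + s - ![c0, c1, c2] k + (l : ℂ) * δ) ≠ 0)
    {A : AddSubgroup ℂ} (mδ : δ ∈ A) (ms : s ∈ A) (mc0 : c0 ∈ A) (mc1 : c1 ∈ A) (mc2 : c2 ∈ A)
    (md0 : d0 ∈ A) (md1 : d1 ∈ A) (md2 : d2 ∈ A) (hx : GenX f δ A x) :
    Evw f δ a xt st ![ct0, ct1, ct2] ![d0, d1, d2] =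
      pref f δ x α s d0 d1 d2 * Evw f δ a x s ![c0, c1, c2] ![d0, d1, d2] := by
  have hL : ∑ i, a i = -((∑ i, α i : ℕ) : ℂ) * δ := by
    rw [sum_congr rfl fun i _ => ha i, ← sum_mul, sum_neg_distrib]; push_cast; rfl
  obtain ⟨L, hLdef⟩ : ∃ L, L = ∑ i, α i := ⟨_, rfl⟩
  rw [← hLdef] at hL
  have hxt' : ∀ i, xt i = ((L : ℂ) - α i) * δ - x i := fun i => by rw [hxt, hL, ha]; ring
  rw [hL] at hbal
  have hcard : (#(univ : Finset (Σ i : Fin m, Fin (α i)))) = L := by rw [card_sigma', hLdef]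
  have mst : st ∈ A := by
    rw [hst, two_mul]
    exact A.sub_mem (A.sub_mem (A.sub_mem (A.add_mem mδ (A.add_mem ms ms)) mc0) mc1) mc2
  -- negation relates the brackets at `xt` to those at `x`
  have hneg : ∀ i, ∀ c ∈ A, f (xt i + c) ≠ 0 := by
    intro i c hc
    have := hx.one i (((α i : ℂ) * δ - (L : ℂ) * δ) - c)
      (A.sub_mem (A.sub_mem (nat_mul_mem mδ _) (nat_mul_mem mδ _)) hc)
    rw [show xt i + c = -(x i + ((α i : ℂ) * δ - (L : ℂ) * δ - c)) by rw [hxt']; ring, hodd]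
    exact neg_ne_zero.mpr this
  have hdt : ∀ i j, i ≠ j → ∀ k : ℤ, f (xt i - xt j + (k : ℂ) * δ) ≠ 0 := by
    intro i j hij k
    rw [show xt i - xt j + (k : ℂ) * δ
      = -(x i - x j + ((α i - α j - k : ℤ) : ℂ) * δ) by rw [hxt', hxt']; push_cast; ring, hodd]
    exact neg_ne_zero.mpr (hx.diff i j hij _)
  have hu : δ + st - ct0 = δ + s - c0 ∧ δ + st - ct1 = δ + s - c1 ∧ δ + st - ct2 = δ + s - c2 := by
    rw [hst, hct0, hct1, hct2]; refine ⟨?_, ?_, ?_⟩ <;> ring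
  have hv : ∀ i, ∀ d ∈ A, ∀ l < α i, f (x i + δ + s - d + (l : ℂ) * δ) ≠ 0 := by
    intro i d hd l _
    rw [show x i + δ + s - d + (l : ℂ) * δ = x i + (δ + s - d + (l : ℂ) * δ) by ring]
    exact hx.one i _ (A.add_mem (A.sub_mem (A.add_mem mδ ms) hd) (nat_mul_mem mδ _))
  have hvt : ∀ i, ∀ d ∈ A, ∀ l < α i, f (xt i + δ + st - d + (l : ℂ) * δ) ≠ 0 := by
    intro i d hd l _
    rw [show xt i + δ + st - d + (l : ℂ) * δ = xt i + (δ + st - d + (l : ℂ) * δ) by ring]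
    exact hneg i _ (A.add_mem (A.sub_mem (A.add_mem mδ mst) hd) (nat_mul_mem mδ _))
  have q2 : ∀ w0 w1 w2 : ℂ, ![w0, w1, w2] 2 = w2 := fun _ _ _ => rfl
  have h50 := h5 0
  have h51 := h5 1
  have h52 := h5 2
  simp only [Matrix.cons_val_zero, Matrix.cons_val_one, q2] at h50 h51 h52
  have hE1 := G3_nodes hodd hδ hx.diff (s := s) (u0 := c0) (u1 := c1) (u2 := c2) (v0 := d0)
    (v1 := d1) (v2 := d2)
    (fun i k => by rw [add_assoc]; exact hx.one i _ (A.add_mem ms (nat_mul_mem mδ k))) ha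
    h50 h51 h52 (fun i => hv i d0 md0) (fun i => hv i d1 md1) (fun i => hv i d2 md2)
  have hE2 := G3_nodes hodd hδ hdt (s := st) (u0 := ct0) (u1 := ct1) (u2 := ct2) (v0 := d0)
    (v1 := d1) (v2 := d2)
    (fun i k => by rw [add_assoc]; exact hneg i _ (A.add_mem mst (nat_mul_mem mδ k))) ha
    (by rw [hu.1]; exact h50) (by rw [hu.2.1]; exact h51) (by rw [hu.2.2]; exact h52)
    (fun i => hvt i d0 md0) (fun i => hvt i d1 md1) (fun i => hvt i d2 md2)
  have hG : G3 f δ (nodes δ xt α) univ st ct0 ct1 ct2 d0 d1 d2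
      = G3 f δ (nodes δ x α) univ s c0 c1 c2 d0 d1 d2 := by
    have e1 : nodes δ xt α = (fun p => ((#(univ : Finset (Σ i : Fin m, Fin (α i))) : ℂ) - 1) * δ
        - nodes δ x α p) ∘ Equiv.sigmaCongrRight fun i => (Fin.revPerm : Equiv.Perm (Fin (α i))) := by
      funext p
      obtain ⟨i, l⟩ := p
      have hl := l.2
      change xt i + ((l : ℕ) : ℂ) * δ
        = ((#(univ : Finset (Σ i : Fin m, Fin (α i))) : ℂ) - 1) * δ
          - (x i + ((Fin.rev l : ℕ) : ℂ) * δ)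
      rw [hcard, hxt', Fin.val_rev, Nat.cast_sub (by omega)]
      push_cast; ring
    rw [e1, G3_equiv, G3_neg hodd, hcard, swap_all hodd hR mδ (hx.nodes hδ mδ α) univ s c0 c1 c2
      d0 d1 d2 ms mc0 mc1 mc2 md0 md1 md2 (by rw [hcard]; linear_combination hbal)]
    subst hst hct0 hct1 hct2
    congr 1
    · linear_combination 2 * hbal
    · linear_combination hbal
    · linear_combination hbal
    · linear_combination hbal
    · linear_combination hbal
    · linear_combination hbal
    · linear_combination hbal
  have hN : pref f δ x α s d0 d1 d2 * nrm f δ xt α st ct0 ct1 ct2 d0 d1 d2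
      = nrm f δ x α s c0 c1 c2 d0 d1 d2 := by
    have r : ∀ i z z', z + z' = 2 * δ + s + st + ((L : ℂ) - α i) * δ - d0 - d1 - d2 →
        sf f δ z (α i) = (-1) ^ α i * sf f δ z' (α i) := fun i z z' h =>
      sf_rev hodd δ _ _ _ (by rw [hst] at h; linear_combination h - hbal)
    have r0 : ∀ i, sf f δ (δ + st + xt i) (α i)
        = (-1) ^ α i * sf f δ (δ + s + x i - d0 - d1 - d2) (α i) := fun i =>
      r i _ _ (by rw [hxt']; ring)
    have r1 : ∀ i, sf f δ (xt i + δ + st - d0) (α i)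
        = (-1) ^ α i * sf f δ (δ + s + x i - d1 - d2) (α i) := fun i =>
      r i _ _ (by rw [hxt']; ring)
    have r2 : ∀ i, sf f δ (xt i + δ + st - d1) (α i)
        = (-1) ^ α i * sf f δ (δ + s + x i - d0 - d2) (α i) := fun i =>
      r i _ _ (by rw [hxt']; ring)
    have r3 : ∀ i, sf f δ (xt i + δ + st - d2) (α i)
        = (-1) ^ α i * sf f δ (δ + s + x i - d0 - d1) (α i) := fun i =>
      r i _ _ (by rw [hxt']; ring)
    have hne : ∀ i, ∀ c ∈ A, ∀ z, z = x i + c → sf f δ z (α i) ≠ 0 := by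
      rintro i c hc z rfl
      refine sf_ne_zero fun l _ => ?_
      rw [add_assoc]
      exact hx.one i _ (A.add_mem hc (nat_mul_mem mδ l))
    have mδs := A.add_mem mδ ms
    rw [pref, nrm, nrm, hu.1, hu.2.1, hu.2.2]
    have key : (∏ i, sf f δ (δ + s + x i - d0) (α i) * sf f δ (δ + s + x i - d1) (α i)
          / (sf f δ (δ + s + x i) (α i) * sf f δ (δ + s + x i - d0 - d1) (α i)))
        * (∏ i, sf f δ (δ + s + x i - d2) (α i)
              * sf f δ (δ + s + x i - d0 - d1 - d2) (α i)
            / (sf f δ (δ + s + x i - d0 - d2) (α i)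
              * sf f δ (δ + s + x i - d1 - d2) (α i)))
        * ((∏ i, (sf f δ (δ + st + xt i) (α i))⁻¹)
          * ((∏ i, sf f δ (xt i + δ + st - d0) (α i)) * (∏ i, sf f δ (xt i + δ + st - d1) (α i))
            * (∏ i, sf f δ (xt i + δ + st - d2) (α i))))
        = (∏ i, (sf f δ (δ + s + x i) (α i))⁻¹)
          * ((∏ i, sf f δ (x i + δ + s - d0) (α i)) * (∏ i, sf f δ (x i + δ + s - d1) (α i))
            * (∏ i, sf f δ (x i + δ + s - d2) (α i))) := by
      simp only [← prod_mul_distrib]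
      refine prod_congr rfl fun i _ => ?_
      rw [r0, r1, r2, r3, show x i + δ + s - d0 = δ + s + x i - d0 by ring,
        show x i + δ + s - d1 = δ + s + x i - d1 by ring,
        show x i + δ + s - d2 = δ + s + x i - d2 by ring]
      have n0 := hne i _ mδs (δ + s + x i) (by ring)
      have n1 := hne i _ (A.sub_mem (A.sub_mem mδs md0) md1) (δ + s + x i - d0 - d1) (by ring)
      have n2 := hne i _ (A.sub_mem (A.sub_mem mδs md0) md2) (δ + s + x i - d0 - d2) (by ring)
      have n3 := hne i _ (A.sub_mem (A.sub_mem mδs md1) md2) (δ + s + x i - d1 - d2) (by ring)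
      have n4 := hne i _ (A.sub_mem (A.sub_mem (A.sub_mem mδs md0) md1) md2)
        (δ + s + x i - d0 - d1 - d2) (by ring)
      have hS : ((-1 : ℂ) ^ α i) ^ 2 = 1 := by rw [← pow_mul, mul_comm, pow_mul]; norm_num
      have hS0 : (-1 : ℂ) ^ α i ≠ 0 := pow_ne_zero _ (by norm_num)
      generalize (-1 : ℂ) ^ α i = S at hS hS0 ⊢
      generalize sf f δ (δ + s + x i) (α i) = X0 at n0 ⊢
      generalize sf f δ (δ + s + x i - d0 - d1) (α i) = X1 at n1 ⊢
      generalize sf f δ (δ + s + x i - d0 - d2) (α i) = X2 at n2 ⊢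
      generalize sf f δ (δ + s + x i - d1 - d2) (α i) = X3 at n3 ⊢
      generalize sf f δ (δ + s + x i - d0 - d1 - d2) (α i) = X4 at n4 ⊢
      generalize sf f δ (δ + s + x i - d0) (α i) = X5
      generalize sf f δ (δ + s + x i - d1) (α i) = X6
      generalize sf f δ (δ + s + x i - d2) (α i) = X7
      field_simp
      linear_combination (X5 * X6 * X7) * hS
    linear_combination (sf f δ (δ + s - c0) (∑ i, α i) * sf f δ (δ + s - c1) (∑ i, α i)
      * sf f δ (δ + s - c2) (∑ i, α i)) * key
  have hN0 : nrm f δ xt α st ct0 ct1 ct2 d0 d1 d2 ≠ 0 := by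
    rw [nrm, hu.1, hu.2.1, hu.2.2]
    refine mul_ne_zero (mul_ne_zero (prod_ne_zero_iff.mpr fun i _ => inv_ne_zero
      (sf_ne_zero fun l _ => ?_)) (mul_ne_zero (mul_ne_zero (sf_ne_zero h50) (sf_ne_zero h51))
      (sf_ne_zero h52))) (mul_ne_zero (mul_ne_zero ?_ ?_) ?_)
    · rw [show δ + st + xt i + (l : ℂ) * δ = xt i + (δ + st + (l : ℂ) * δ) by ring]
      exact hneg i _ (A.add_mem (A.add_mem mδ mst) (nat_mul_mem mδ _))
    · exact prod_ne_zero_iff.mpr fun i _ => sf_ne_zero (hvt i d0 md0)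
    · exact prod_ne_zero_iff.mpr fun i _ => sf_ne_zero (hvt i d1 md1)
    · exact prod_ne_zero_iff.mpr fun i _ => sf_ne_zero (hvt i d2 md2)
  rw [hG, hE1, ← hN] at hE2
  refine mul_left_cancel₀ hN0 ?_
  rw [← hE2]; ring
end

/-! ### Removing the genericity of `x` by continuity -/

section
variable {f : ℂ → ℂ} {δ : ℂ} {m : ℕ} {α : Fin m → ℕ}

theorem zeros_countable (hf : f ≠ 0) (hdiff : Differentiable ℂ f) : {z | f z = 0}.Countable := by
  have hd : DiscreteTopology {z | f z = 0} := by
    rw [discreteTopology_subtype_iff]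
    intro z _
    rw [Filter.inf_principal_eq_bot]
    by_contra hcon
    have hfr : ∃ᶠ w in nhdsWithin z {z}ᶜ, f w = 0 := fun h => hcon h
    have han : AnalyticOnNhd ℂ f Set.univ := fun w _ => hdiff.analyticAt w
    have := han.eqOn_zero_of_preconnected_of_frequently_eq_zero isPreconnected_univ
      (Set.mem_univ z) hfr
    exact hf (funext fun w => this (Set.mem_univ w))
  exact Set.countable_coe_iff.mp countable_of_Lindelof_of_discrete

theorem bad_countable (hf : f ≠ 0) (hdiff : Differentiable ℂ f) (c : ℂ) {b : ℂ} (hb : b ≠ 0) :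
    {t : ℂ | f (c + t * b) = 0}.Countable := by
  refine (zeros_countable hf hdiff).preimage (f := fun t : ℂ => c + t * b) fun t t' h => ?_
  simpa [hb] using h

/-- The parameters generate a countable group, realised as the image of `ℤ⁸`. -/
theorem exists_countable_addSubgroup (g : Fin 8 → ℂ) :
    ∃ A : AddSubgroup ℂ, (A : Set ℂ).Countable ∧ ∀ i, g i ∈ A := by
  let φ : (Fin 8 → ℤ) →+ ℂ :=
    { toFun := fun n => ∑ i, (n i : ℂ) * g i
      map_zero' := by simp
      map_add' := fun n k => by simp [add_mul, sum_add_distrib] }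
  refine ⟨φ.range, ?_, fun i => ⟨Pi.single i 1, ?_⟩⟩
  · rw [AddMonoidHom.coe_range]; exact Set.countable_range _
  · change ∑ j, ((Pi.single i 1 : Fin 8 → ℤ) j : ℂ) * g j = g i
    simp [Pi.single_apply]

/-- A one-parameter deformation of `x` along which all coordinates move at different speeds. -/
def pert (x : Fin m → ℂ) (t : ℂ) (i : Fin m) : ℂ := x i + t * ((i : ℕ) + 1 : ℂ)

theorem pert_zero (x : Fin m → ℂ) : pert x 0 = x := by funext i; simp [pert]

/-- The deformed point is generic for all `t` outside a countable set. -/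
theorem pert_dense (hf : f ≠ 0) (hdiff : Differentiable ℂ f) {A : AddSubgroup ℂ}
    (hA : (A : Set ℂ).Countable) (x : Fin m → ℂ) : Dense {t : ℂ | GenX f δ A (pert x t)} := by
  have hc : ((⋃ i, ⋃ c ∈ (A : Set ℂ), {t : ℂ | f (x i + c + t * ((i : ℕ) + 1 : ℂ)) = 0}) ∪
      (⋃ i, ⋃ j, ⋃ c ∈ (A : Set ℂ),
        {t : ℂ | f (x i + x j + c + t * (((i : ℕ) + 1 : ℂ) + ((j : ℕ) + 1 : ℂ))) = 0}) ∪
      (⋃ i, ⋃ j, ⋃ (_ : i ≠ j), ⋃ k : ℤ,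
        {t : ℂ | f (x i - x j + k * δ + t * (((i : ℕ) : ℂ) - ((j : ℕ) : ℂ))) = 0})).Countable := by
    refine (Set.Countable.union ?_ ?_).union ?_
    · refine Set.countable_iUnion fun i => hA.biUnion fun c _ => bad_countable hf hdiff _ ?_
      exact_mod_cast (Nat.succ_ne_zero i.1)
    · refine Set.countable_iUnion fun i => Set.countable_iUnion fun j =>
        hA.biUnion fun c _ => bad_countable hf hdiff _ ?_
      exact_mod_cast (show (i : ℕ) + 1 + (j + 1) ≠ 0 by omega)
    · refine Set.countable_iUnion fun i => Set.countable_iUnion fun j =>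
        Set.countable_iUnion fun hij => Set.countable_iUnion fun k => bad_countable hf hdiff _ ?_
      rw [sub_ne_zero]
      exact_mod_cast fun h => hij (Fin.ext h)
  refine (hc.dense_compl ℝ).mono fun t ht => ?_
  simp only [Set.mem_compl_iff, Set.mem_union, Set.mem_iUnion, not_or, not_exists] at ht
  obtain ⟨⟨h1, h2⟩, h3⟩ := ht
  refine ⟨fun i c hc h => h1 i c hc ?_, fun i j c hc h => h2 i j c hc ?_,
    fun i j hij k h => h3 i j hij k ?_⟩
  · rw [Set.mem_ofPred_eq, ← h, pert]; congr 1; ring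
  · rw [Set.mem_ofPred_eq, ← h, pert, pert]; congr 1; ring
  · rw [Set.mem_ofPred_eq, ← h, pert, pert]; congr 1; ring

theorem sf_continuous (hdiff : Differentiable ℂ f) {g : ℂ → ℂ} (hg : Continuous g) (k : ℕ) :
    Continuous fun t => sf f δ (g t) k :=
  continuous_finsetProd _ fun _ _ => hdiff.continuous.comp (hg.add continuous_const)

theorem Del_continuous (hdiff : Differentiable ℂ f) {X : ℂ → Fin m → ℂ}
    (hX : ∀ i, Continuous fun t => X t i) : Continuous fun t => Del f (X t) :=
  continuous_finsetProd _ fun _ _ => continuous_finsetProd _ fun _ _ =>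
    hdiff.continuous.comp ((hX _).sub (hX _))

theorem Eterm_continuousAt (hdiff : Differentiable ℂ f) {X : ℂ → Fin m → ℂ}
    (hX : ∀ i, Continuous fun t => X t i) {x : Fin m → ℂ} (hx : X 0 = x) {n : ℕ} {a : Fin m → ℂ}
    {s : ℂ} {u v : Fin n → ℂ} {μ : Fin m → ℕ} (hμ : ∀ i, μ i ≤ α i)
    (h1 : ∀ i j, i ≠ j → f (x i - x j) ≠ 0)
    (h2 : ∀ i, f (x i + s) ≠ 0)
    (h3 : ∀ (j : Fin m) (l : ℕ), l < ∑ i, α i → f (δ + s + x j - a j + (l : ℂ) * δ) ≠ 0)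
    (h4 : ∀ (i j : Fin m) (l : ℕ), l < α i → f (x i - x j + δ + (l : ℂ) * δ) ≠ 0)
    (h6 : ∀ (i : Fin m) (k : Fin n) (l : ℕ), l < α i →
      f (x i + δ + s - v k + (l : ℂ) * δ) ≠ 0) :
    ContinuousAt (fun t => Eterm f δ a (X t) s u v μ) 0 := by
  have hsum : ∑ i, μ i ≤ ∑ i, α i := sum_le_sum fun i _ => hμ i
  have hc := hdiff.continuous
  unfold Eterm
  refine ContinuousAt.mul (ContinuousAt.mul (ContinuousAt.mul ?_ ?_) ?_) ?_
  · refine ContinuousAt.div (Del_continuous hdiff fun i => (hX i).add continuous_const).continuousAt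
      (Del_continuous hdiff hX).continuousAt ?_
    rw [hx, Del]
    refine prod_ne_zero_iff.mpr fun i _ => prod_ne_zero_iff.mpr fun j hj => h1 i j ?_
    exact (mem_filter.mp hj).2.ne
  · refine tendsto_finsetProd _ fun i _ => ContinuousAt.div
      (hc.comp (((hX i).add continuous_const).add continuous_const)).continuousAt
      (hc.comp ((hX i).add continuous_const)).continuousAt ?_
    change f (X 0 i + s) ≠ 0
    rw [hx]; exact h2 i
  · refine tendsto_finsetProd _ fun j _ => ContinuousAt.mul (ContinuousAt.div
      (sf_continuous hdiff (continuous_const.add (hX j)) _).continuousAt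
      (sf_continuous hdiff ((continuous_const.add (hX j)).sub continuous_const) _).continuousAt ?_)
      (tendsto_finsetProd _ fun i _ => ContinuousAt.div
        (sf_continuous hdiff (((hX i).sub (hX j)).add continuous_const) _).continuousAt
        (sf_continuous hdiff (((hX i).sub (hX j)).add continuous_const) _).continuousAt ?_)
    · rw [hx]; exact sf_ne_zero fun l hl => h3 j l (hl.trans_le hsum)
    · rw [hx]; exact sf_ne_zero fun l hl => h4 i j l (hl.trans_le (hμ i))
  · refine tendsto_finsetProd _ fun k _ => ContinuousAt.mul continuousAt_const
      (tendsto_finsetProd _ fun i _ => ContinuousAt.div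
        (sf_continuous hdiff ((hX i).add continuous_const) _).continuousAt
        (sf_continuous hdiff ((((hX i).add continuous_const).add continuous_const).sub
          continuous_const) _).continuousAt ?_)
    rw [hx]; exact sf_ne_zero fun l hl => h6 i k l (hl.trans_le (hμ i))

theorem Evw_continuousAt (hodd : ∀ t : ℂ, f (-t) = -f t) (hdiff : Differentiable ℂ f)
    {X : ℂ → Fin m → ℂ} (hX : ∀ i, Continuous fun t => X t i) {x : Fin m → ℂ} (hx : X 0 = x)
    {n : ℕ} {a : Fin m → ℂ} (ha : ∀ i, a i = -(α i : ℂ) * δ) {s : ℂ} {u v : Fin n → ℂ}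
    (h1 : ∀ i j, i ≠ j → f (x i - x j) ≠ 0)
    (h2 : ∀ i, f (x i + s) ≠ 0)
    (h3 : ∀ (j : Fin m) (l : ℕ), l < ∑ i, α i → f (δ + s + x j - a j + (l : ℂ) * δ) ≠ 0)
    (h4 : ∀ (i j : Fin m) (l : ℕ), l < α i → f (x i - x j + δ + (l : ℂ) * δ) ≠ 0)
    (h6 : ∀ (i : Fin m) (k : Fin n) (l : ℕ), l < α i →
      f (x i + δ + s - v k + (l : ℂ) * δ) ≠ 0) :
    ContinuousAt (fun t => Evw f δ a (X t) s u v) 0 := by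
  simp only [Evw_eq_sum hodd ha]
  refine tendsto_finsetSum _ fun μ hμ => ?_
  simp only [Fintype.mem_piFinset, mem_range] at hμ
  exact Eterm_continuousAt hdiff hX hx (fun i => Nat.lt_succ_iff.mp (hμ i)) h1 h2 h3 h4 h6

theorem pref_continuousAt (hdiff : Differentiable ℂ f)
    {X : ℂ → Fin m → ℂ} (hX : ∀ i, Continuous fun t => X t i) {x : Fin m → ℂ} (hx : X 0 = x)
    {s d0 d1 d2 : ℂ}
    (hp1 : ∀ (i : Fin m) (l : ℕ), l < α i → f (δ + s + x i + (l : ℂ) * δ) ≠ 0)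
    (hp2 : ∀ (i : Fin m) (l : ℕ), l < α i → f (δ + s + x i - d0 - d1 + (l : ℂ) * δ) ≠ 0)
    (hp3 : ∀ (i : Fin m) (l : ℕ), l < α i → f (δ + s + x i - d0 - d2 + (l : ℂ) * δ) ≠ 0)
    (hp4 : ∀ (i : Fin m) (l : ℕ), l < α i → f (δ + s + x i - d1 - d2 + (l : ℂ) * δ) ≠ 0) :
    ContinuousAt (fun t => pref f δ (X t) α s d0 d1 d2) 0 := by
  have h0 : ∀ i, Continuous fun t => δ + s + X t i := fun i => continuous_const.add (hX i)
  have hs : ∀ {g : ℂ → ℂ}, Continuous g → ∀ c, Continuous fun t => g t - c :=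
    fun hg c => hg.sub continuous_const
  unfold pref
  refine ContinuousAt.mul (tendsto_finsetProd _ fun i _ => ContinuousAt.div
    ((sf_continuous hdiff (hs (h0 i) _) _).mul (sf_continuous hdiff (hs (h0 i) _) _)).continuousAt
    ((sf_continuous hdiff (h0 i) _).mul
      (sf_continuous hdiff (hs (hs (h0 i) _) _) _)).continuousAt ?_)
    (tendsto_finsetProd _ fun i _ => ContinuousAt.div
    ((sf_continuous hdiff (hs (h0 i) _) _).mul
      (sf_continuous hdiff (hs (hs (hs (h0 i) _) _) _) _)).continuousAt
    ((sf_continuous hdiff (hs (hs (h0 i) _) _) _).mul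
      (sf_continuous hdiff (hs (hs (h0 i) _) _) _)).continuousAt ?_)
  · rw [hx]; exact mul_ne_zero (sf_ne_zero (hp1 i)) (sf_ne_zero (hp2 i))
  · rw [hx]; exact mul_ne_zero (sf_ne_zero (hp3 i)) (sf_ne_zero (hp4 i))
end

/-- Multiple Bailey transformation II under the type-B termination condition
`a_i = -α_i δ` (Theorem 4.3 (II), formula (4.15)). -/
theorem multiple_bailey_transformation_II_typeB
    (f : ℂ → ℂ) (hf : f ≠ 0) (hodd : ∀ t : ℂ, f (-t) = -f t) (hdiff : Differentiable ℂ f)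
    (hRiem : ∀ x y u v : ℂ,
      f (x + y) * f (x - y) * f (u + v) * f (u - v) =
        f (x + u) * f (x - u) * f (y + v) * f (y - v)
          - f (x + v) * f (x - v) * f (y + u) * f (y - u))
    (δ : ℂ) (hδ : ∀ k : ℤ, k ≠ 0 → f ((k : ℂ) * δ) ≠ 0)
    (m : ℕ) (a x : Fin m → ℂ) (s c0 c1 c2 d0 d1 d2 : ℂ) (α : Fin m → ℕ)
    (ha : ∀ i, a i = -(α i : ℂ) * δ)
    (hbal : (∑ i, a i) + (c0 + c1 + c2 + d0 + d1 + d2) = 2 * δ + 3 * s)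
    (st : ℂ) (hst : st = δ + 2 * s - c0 - c1 - c2)
    (ct0 ct1 ct2 : ℂ) (hct0 : ct0 = δ + s - c1 - c2) (hct1 : ct1 = δ + s - c0 - c2)
    (hct2 : ct2 = δ + s - c0 - c1)
    (xt : Fin m → ℂ) (hxt : ∀ i, xt i = a i - x i - ∑ j, a j)
    (h1 : ∀ i j, i ≠ j → f (x i - x j) ≠ 0)
    (h1t : ∀ i j, i ≠ j → f (xt i - xt j) ≠ 0)
    (h2 : ∀ i, f (x i + s) ≠ 0) (h2t : ∀ i, f (xt i + st) ≠ 0)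
    (h3 : ∀ (j : Fin m) (l : ℕ), l < ∑ i, α i →
      f (δ + s + x j - a j + (l : ℂ) * δ) ≠ 0)
    (h3t : ∀ (j : Fin m) (l : ℕ), l < ∑ i, α i →
      f (δ + st + xt j - a j + (l : ℂ) * δ) ≠ 0)
    (h4 : ∀ (i j : Fin m) (l : ℕ), l < α i → f (x i - x j + δ + (l : ℂ) * δ) ≠ 0)
    (h4t : ∀ (i j : Fin m) (l : ℕ), l < α i → f (xt i - xt j + δ + (l : ℂ) * δ) ≠ 0)
    (h5 : ∀ (k : Fin 3) (l : ℕ), l < ∑ i, α i →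
      f (δ + s - ![c0, c1, c2] k + (l : ℂ) * δ) ≠ 0)
    (h5t : ∀ (k : Fin 3) (l : ℕ), l < ∑ i, α i →
      f (δ + st - ![ct0, ct1, ct2] k + (l : ℂ) * δ) ≠ 0)
    (h6 : ∀ (i : Fin m) (k : Fin 3) (l : ℕ), l < α i →
      f (x i + δ + s - ![d0, d1, d2] k + (l : ℂ) * δ) ≠ 0)
    (h6t : ∀ (i : Fin m) (k : Fin 3) (l : ℕ), l < α i →
      f (xt i + δ + st - ![d0, d1, d2] k + (l : ℂ) * δ) ≠ 0)
    (hp1 : ∀ (i : Fin m) (l : ℕ), l < α i → f (δ + s + x i + (l : ℂ) * δ) ≠ 0)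
    (hp2 : ∀ (i : Fin m) (l : ℕ), l < α i →
      f (δ + s + x i - d0 - d1 + (l : ℂ) * δ) ≠ 0)
    (hp3 : ∀ (i : Fin m) (l : ℕ), l < α i →
      f (δ + s + x i - d0 - d2 + (l : ℂ) * δ) ≠ 0)
    (hp4 : ∀ (i : Fin m) (l : ℕ), l < α i →
      f (δ + s + x i - d1 - d2 + (l : ℂ) * δ) ≠ 0) :
    Evw f δ a xt st ![ct0, ct1, ct2] ![d0, d1, d2] =
      (∏ i, sf f δ (δ + s + x i - d0) (α i) * sf f δ (δ + s + x i - d1) (α i)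
          / (sf f δ (δ + s + x i) (α i) * sf f δ (δ + s + x i - d0 - d1) (α i)))
        * (∏ i, sf f δ (δ + s + x i - d2) (α i)
              * sf f δ (δ + s + x i - d0 - d1 - d2) (α i)
            / (sf f δ (δ + s + x i - d0 - d2) (α i)
              * sf f δ (δ + s + x i - d1 - d2) (α i)))
        * Evw f δ a x s ![c0, c1, c2] ![d0, d1, d2] := by
  obtain ⟨A, hA, hmem⟩ := exists_countable_addSubgroup ![δ, s, c0, c1, c2, d0, d1, d2]
  have hXc : ∀ i, Continuous fun t => pert x t i := fun i =>
    continuous_const.add (continuous_id.mul continuous_const)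
  have hX0 := pert_zero x
  have hYc : ∀ i, Continuous fun t => a i - pert x t i - ∑ j, a j := fun i =>
    (continuous_const.sub (hXc i)).sub continuous_const
  have hY0 : (fun i => a i - pert x 0 i - ∑ j, a j) = xt := by
    rw [hX0]; exact funext fun i => (hxt i).symm
  have hl := Evw_continuousAt (X := fun t i => a i - pert x t i - ∑ j, a j) (s := st)
    (u := ![ct0, ct1, ct2]) hodd hdiff hYc hY0 ha h1t h2t h3t h4t h6t
  have hr := (pref_continuousAt hdiff hXc hX0 hp1 hp2 hp3 hp4).mul
    (Evw_continuousAt (s := s) (u := ![c0, c1, c2]) hodd hdiff hXc hX0 ha h1 h2 h3 h4 h6)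
  -- the original `x` is a limit of generic points along the deformation
  have hne : (nhdsWithin (0 : ℂ) {t | GenX f δ A (pert x t)}).NeBot :=
    mem_closure_iff_nhdsWithin_neBot.mp (pert_dense hf hdiff hA x 0)
  have hlim := tendsto_nhds_unique_of_eventuallyEq
    (hl.tendsto.mono_left (nhdsWithin_le_nhds (s := {t | GenX f δ A (pert x t)})))
    (hr.tendsto.mono_left nhdsWithin_le_nhds)
    (eventually_nhdsWithin_of_forall fun t ht => generic_case hodd hRiem hδ ha hbal hst hct0 hct1
      hct2 (fun _ => rfl) h5 (hmem 0) (hmem 1) (hmem 2) (hmem 3) (hmem 4) (hmem 5) (hmem 6)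
      (hmem 7) ht)
  simp only [Pi.mul_apply, hX0, ← hxt] at hlim
  exact hlim
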